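/- arXiv:1407.4228 — 2 statements merged into one kernel-verified Lean document; each statement's English description precedes it below -/
import Mathlib

section
/- Let λ, μ ∈ Λ_Δ(n,r), let y, d ∈ D^Δ_{λ,μ} with y ≤ d in the Bruhat order and y ≠ d, and set B = J_Δ(λ,y,μ) and A = J_Δ(λ,d,μ). Then B ⊏ A; that is, B ⊑ A and B ≠ A. -/
open scoped Classical

noncomputable section

/-- The extended affine symmetric group `𝔖_{Δ,r}`: permutations `w` of `ℤ`
with `w (i + r) = w i + r` for all `i`. -/
def AffSym (r : ℕ) : Subgroup (Equiv.Perm ℤ) where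
  carrier := {w | ∀ i : ℤ, w (i + r) = w i + r}
  one_mem' := fun _ => rfl
  mul_mem' := by
    intro a b ha hb i
    simp only [Equiv.Perm.mul_apply, hb i, ha (b i)]
  inv_mem' := by
    intro a ha i
    apply a.injective
    rw [ha (a⁻¹ i)]
    simp

/-- The underlying function of the affine transposition `(i,j)`. -/
def tFun (r : ℕ) (i j : ℤ) : ℤ → ℤ := fun k =>
  if (r : ℤ) ∣ (k - i) then j + (k - i)
  else if (r : ℤ) ∣ (k - j) then i + (k - j)
  else k

theorem tFun_invol (r : ℕ) (i j : ℤ) (h : ¬ (r : ℤ) ∣ (j - i)) :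
    Function.Involutive (tFun r i j) := by
  intro k
  by_cases h1 : (r : ℤ) ∣ (k - i)
  · have e1 : tFun r i j k = j + (k - i) := by simp only [tFun]; rw [if_pos h1]
    have h2 : ¬ (r : ℤ) ∣ (j + (k - i) - i) := by
      intro hd
      apply h
      have h5 := hd.sub h1
      have h6 : j + (k - i) - i - (k - i) = j - i := by ring
      rwa [h6] at h5
    have h3 : (r : ℤ) ∣ (j + (k - i) - j) := by simpa using h1
    rw [e1]; simp only [tFun]; rw [if_neg h2, if_pos h3]; ring
  · by_cases h2 : (r : ℤ) ∣ (k - j)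
    · have e1 : tFun r i j k = i + (k - j) := by
        simp only [tFun]; rw [if_neg h1, if_pos h2]
      have h3 : (r : ℤ) ∣ (i + (k - j) - i) := by simpa using h2
      rw [e1]; simp only [tFun]; rw [if_pos h3]; ring
    · have e1 : tFun r i j k = k := by simp only [tFun]; rw [if_neg h1, if_neg h2]
      rw [e1, e1]

/-- The affine transposition `(i,j) ∈ W_r` (defined to be `1` in the degenerate
case `i ≡ j (mod r)`). -/
def tPerm (r : ℕ) (i j : ℤ) : Equiv.Perm ℤ :=
  if h : (r : ℤ) ∣ (j - i) then 1 else Function.Involutive.toPerm _ (tFun_invol r i j h)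

/-- The set of Coxeter generators `s_1, …, s_r` of `W_r`. -/
def sGen (r : ℕ) : Set (Equiv.Perm ℤ) :=
  {w | ∃ i : ℤ, 1 ≤ i ∧ i ≤ (r : ℤ) ∧ w = tPerm r i (i + 1)}

/-- The affine Weyl group `W_r`, generated by `s_1, …, s_r`. -/
def WGrp (r : ℕ) : Subgroup (Equiv.Perm ℤ) := Subgroup.closure (sGen r)

/-- Length of an element of `W_r`: the minimal length of an expression
as a product of the generators `s_1, …, s_r`. -/
def lenW (r : ℕ) (x : Equiv.Perm ℤ) : ℕ :=
  sInf {m | ∃ l : List (Equiv.Perm ℤ), l.length = m ∧ (∀ s ∈ l, s ∈ sGen r) ∧ l.prod = x}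

/-- The shift permutation `ρ : j ↦ j + 1`. -/
def rhoP : Equiv.Perm ℤ := Equiv.addRight 1

/-- For `w = ρ^a x` with `x ∈ W_r`, recovers the exponent `a`. -/
def shiftIdx (r : ℕ) (w : Equiv.Perm ℤ) : ℤ :=
  (∑ i ∈ Finset.Icc (1 : ℤ) (r : ℤ), (w i - i)) / r

/-- Length on `𝔖_{Δ,r}`: writing `w = ρ^a x` with `x ∈ W_r`, `ℓ(w) = ℓ(x)`. -/
def alen (r : ℕ) (w : Equiv.Perm ℤ) : ℕ :=
  lenW r ((rhoP ^ shiftIdx r w)⁻¹ * w)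

/-- The set `T` of affine reflections `(i,j)`, `i < j`, `i ≢ j (mod r)`. -/
def TSet (r : ℕ) : Set (Equiv.Perm ℤ) :=
  {t | ∃ i j : ℤ, i < j ∧ ¬ (r : ℤ) ∣ (j - i) ∧ t = tPerm r i j}

/-- Bruhat order on `W_r`: `y ≤ w` iff `w = t_1 ⋯ t_m y` with all `t_i ∈ T` and
`ℓ(t_i ⋯ t_m y) > ℓ(t_{i+1} ⋯ t_m y)` for all `i`. -/
def bruhatLE (r : ℕ) (y w : Equiv.Perm ℤ) : Prop :=
  ∃ l : List (Equiv.Perm ℤ), (∀ t ∈ l, t ∈ TSet r) ∧ w = l.prod * y ∧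
    ∀ k, k < l.length →
      lenW r ((l.drop (k + 1)).prod * y) < lenW r ((l.drop k).prod * y)

/-- Bruhat order extended to `𝔖_{Δ,r}`: `ρ^a y ≤ ρ^b w` iff `a = b` and `y ≤ w`. -/
def abruhatLE (r : ℕ) (y w : Equiv.Perm ℤ) : Prop :=
  shiftIdx r y = shiftIdx r w ∧
    bruhatLE r ((rhoP ^ shiftIdx r y)⁻¹ * y) ((rhoP ^ shiftIdx r w)⁻¹ * w)

/-- `Λ_Δ(n,r)`: `n`-periodic sequences of naturals summing to `r` over a period. -/
def LambdaSet (n r : ℕ) : Set (ℤ → ℕ) :=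
  {lam | (∀ i : ℤ, lam i = lam (i - n)) ∧ ∑ i ∈ Finset.Icc (1 : ℤ) (n : ℤ), lam i = r}

/-- The interval `R^λ_m ⊆ ℤ`; for `m = i + kn` with `1 ≤ i ≤ n` this is
`{λ_{k,i-1}+1, …, λ_{k,i-1}+λ_i}` where `λ_{k,i-1} = kr + λ_1 + ⋯ + λ_{i-1}`. -/
def Rset (n r : ℕ) (lam : ℤ → ℕ) (m : ℤ) : Set ℤ :=
  {a | ((m - 1) / n) * r + ∑ t ∈ Finset.Icc (1 : ℤ) ((m - 1) % n), (lam t : ℤ) < a ∧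
       a ≤ ((m - 1) / n) * r + ∑ t ∈ Finset.Icc (1 : ℤ) ((m - 1) % n + 1), (lam t : ℤ)}

/-- The finite symmetric group `𝔖_r ⊆ W_r`, generated by `s_1, …, s_{r-1}`. -/
def SymFin (r : ℕ) : Subgroup (Equiv.Perm ℤ) :=
  Subgroup.closure {w | ∃ i : ℤ, 1 ≤ i ∧ i < (r : ℤ) ∧ w = tPerm r i (i + 1)}

/-- The Young subgroup `𝔖_λ`: elements of `𝔖_r` stabilizing each `R^λ_i`, `1 ≤ i ≤ n`. -/
def YoungSet (n r : ℕ) (lam : ℤ → ℕ) : Set (Equiv.Perm ℤ) :=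
  {w | w ∈ SymFin r ∧ ∀ i : ℤ, 1 ≤ i → i ≤ (n : ℤ) → w '' Rset n r lam i = Rset n r lam i}

/-- `D^Δ_λ`: distinguished right coset representatives. -/
def DRep (n r : ℕ) (lam : ℤ → ℕ) : Set (Equiv.Perm ℤ) :=
  {d | d ∈ AffSym r ∧ ∀ w ∈ YoungSet n r lam, alen r (w * d) = alen r w + alen r d}

/-- `D^Δ_{λ,μ} = D^Δ_λ ∩ (D^Δ_μ)⁻¹`. -/
def DRep2 (n r : ℕ) (lam mu : ℤ → ℕ) : Set (Equiv.Perm ℤ) :=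
  {d | d ∈ DRep n r lam ∧ d⁻¹ ∈ DRep n r mu}

/-- The matrix `J_Δ(λ,d,μ) = (|R^λ_k ∩ d(R^μ_l)|)_{k,l}`. -/
def JMat (n r : ℕ) (lam mu : ℤ → ℕ) (d : Equiv.Perm ℤ) : ℤ → ℤ → ℕ :=
  fun k l => (Rset n r lam k ∩ (d '' Rset n r mu l)).ncard

/-- `Θ_Δ(n)`: ℕ-matrices, `n`-periodic along the diagonal, with finite rows and columns. -/
def ThetaSet (n : ℕ) : Set (ℤ → ℤ → ℕ) :=
  {A | (∀ i j : ℤ, A (i + n) (j + n) = A i j) ∧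
       (∀ i : ℤ, {j : ℤ | A i j ≠ 0}.Finite) ∧
       (∀ j : ℤ, {i : ℤ | A i j ≠ 0}.Finite)}

/-- `σ(A) = Σ_{1 ≤ i ≤ n, j ∈ ℤ} a_{i,j}`. -/
def sigmaTot (n : ℕ) (A : ℤ → ℤ → ℕ) : ℕ :=
  ∑ᶠ j : ℤ, ∑ i ∈ Finset.Icc (1 : ℤ) (n : ℤ), A i j

/-- Row sums. -/
def roM (A : ℤ → ℤ → ℕ) : ℤ → ℕ := fun i => ∑ᶠ j : ℤ, A i j

/-- Column sums. -/
def coM (A : ℤ → ℤ → ℕ) : ℤ → ℕ := fun j => ∑ᶠ i : ℤ, A i j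

/-- `σ_{i,j}(A)`: for `i < j` the sum `Σ_{s ≤ i, t ≥ j} a_{s,t}`; for `i > j` the
sum `Σ_{s ≥ i, t ≤ j} a_{s,t}`. -/
def sigmaOrd (A : ℤ → ℤ → ℕ) (i j : ℤ) : ℕ :=
  if i < j then ∑ᶠ (p : ℤ × ℤ) (_ : p.1 ≤ i ∧ j ≤ p.2), A p.1 p.2
  else ∑ᶠ (p : ℤ × ℤ) (_ : i ≤ p.1 ∧ p.2 ≤ j), A p.1 p.2

/-- The map `η_m : A ↦ (a_{i, mn+j})_{i,j}`. -/
def etaM (n : ℕ) (m : ℤ) (A : ℤ → ℤ → ℕ) : ℤ → ℤ → ℕ := fun i j => A i (m * n + j)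

/-- The double coset `𝔖_λ d 𝔖_μ`. -/
def DCoset (n r : ℕ) (lam mu : ℤ → ℕ) (d : Equiv.Perm ℤ) : Set (Equiv.Perm ℤ) :=
  {w | ∃ u ∈ YoungSet n r lam, ∃ v ∈ YoungSet n r mu, w = u * d * v}

/-- `d_A = Σ a_{i,j} a_{k,l}` over `1 ≤ i ≤ n`, `k ≤ i`, `j < l`. -/
def dWt (n : ℕ) (A : ℤ → ℤ → ℕ) : ℕ :=
  ∑ᶠ (q : (ℤ × ℤ) × ℤ × ℤ)
    (_ : 1 ≤ q.1.1 ∧ q.1.1 ≤ (n : ℤ) ∧ q.2.1 ≤ q.1.1 ∧ q.1.2 < q.2.2),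
    A q.1.1 q.1.2 * A q.2.1 q.2.2

/-- The embedding `A ↦ Ã` from `Θ_Δ(n)` to `Θ_Δ(N)`. -/
def tildeM (n N : ℕ) (A : ℤ → ℤ → ℕ) : ℤ → ℤ → ℕ := fun k l =>
  let k0 : ℤ := (k - 1) % N + 1
  let l' : ℤ := l - ((k - 1) / N) * N
  let l0 : ℤ := (l' - 1) % N + 1
  let m : ℤ := (l' - 1) / N
  if k0 ≤ n ∧ l0 ≤ n then A k0 (l0 + m * n) else 0

/-- `Θ̃_Δ(n)`: ℤ-matrices with nonnegative off-diagonal entries, `n`-periodic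
along the diagonal, with finite rows and columns. -/
def ThetaTSet (n : ℕ) : Set (ℤ → ℤ → ℤ) :=
  {A | (∀ i j : ℤ, i ≠ j → 0 ≤ A i j) ∧ (∀ i j : ℤ, A (i + n) (j + n) = A i j) ∧
       (∀ i : ℤ, {j : ℤ | A i j ≠ 0}.Finite) ∧ (∀ j : ℤ, {i : ℤ | A i j ≠ 0}.Finite)}

/-- Row sums (ℤ-entry version). -/
def roMZ (A : ℤ → ℤ → ℤ) : ℤ → ℤ := fun i => ∑ᶠ j : ℤ, A i j

/-- Column sums (ℤ-entry version). -/
def coMZ (A : ℤ → ℤ → ℤ) : ℤ → ℤ := fun j => ∑ᶠ i : ℤ, A i j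

/-- `σ_{i,j}` (ℤ-entry version). -/
def sigmaOrdZ (A : ℤ → ℤ → ℤ) (i j : ℤ) : ℤ :=
  if i < j then ∑ᶠ (p : ℤ × ℤ) (_ : p.1 ≤ i ∧ j ≤ p.2), A p.1 p.2
  else ∑ᶠ (p : ℤ × ℤ) (_ : i ≤ p.1 ∧ p.2 ≤ j), A p.1 p.2

/-- The relation `B ⊑ A` on `Θ̃_Δ(n)`. -/
def sqLE (B A : ℤ → ℤ → ℤ) : Prop :=
  (∀ i j : ℤ, i ≠ j → sigmaOrdZ B i j ≤ sigmaOrdZ A i j) ∧ roMZ B = roMZ A ∧ coMZ B = coMZ A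

/-- The vector `v_a ∈ V = 𝔽[ε,ε⁻¹]^r`: for `a = i + kr` with `1 ≤ i ≤ r`,
`v_a = ε^{-k} v_i` where `v_1, …, v_r` is the standard basis. -/
def vb (F : Type*) [Field F] (r : ℕ) (a : ℤ) : Fin r → LaurentPolynomial F :=
  if h : 0 < r then
    Pi.single ⟨((a - 1) % (r : ℤ)).toNat, by
      have h1 : (0 : ℤ) < (r : ℤ) := by exact_mod_cast h
      have h2 : 0 ≤ (a - 1) % (r : ℤ) := Int.emod_nonneg _ (by omega)
      have h3 : (a - 1) % (r : ℤ) < (r : ℤ) := Int.emod_lt_of_pos _ h1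
      omega⟩
      (LaurentPolynomial.T (-((a - 1) / (r : ℤ))))
  else 0

/-- The bound `Σ_{1 ≤ j ≤ i} λ_j + kr` for `m = i + kn`, `1 ≤ i ≤ n`. -/
def bnd (n r : ℕ) (lam : ℤ → ℕ) (m : ℤ) : ℤ :=
  ((m - 1) / n) * r + ∑ t ∈ Finset.Icc (1 : ℤ) ((m - 1) % n + 1), (lam t : ℤ)

/-- The lattice-filtration subspace `L_m = span_𝔽{v_a | a ≤ Σ_{1≤j≤i} λ_j + kr}`. -/
def Lsub (F : Type*) [Field F] (n r : ℕ) (lam : ℤ → ℕ) (m : ℤ) :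
    Submodule F (Fin r → LaurentPolynomial F) :=
  Submodule.span F {x | ∃ a : ℤ, a ≤ bnd n r lam m ∧ x = vb F r a}

/-- The subspace `L'_m = span_𝔽{v_{d(a)} | a ≤ Σ_{1≤j≤i} μ_j + kr}`. -/
def Lsub' (F : Type*) [Field F] (n r : ℕ) (mu : ℤ → ℕ) (d : Equiv.Perm ℤ) (m : ℤ) :
    Submodule F (Fin r → LaurentPolynomial F) :=
  Submodule.span F {x | ∃ a : ℤ, a ≤ bnd n r mu m ∧ x = vb F r (d a)}
end
namespace JProof

theorem tPerm_apply {r : ℕ} {i j : ℤ} (h : ¬ (r : ℤ) ∣ (j - i)) (k : ℤ) :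
    tPerm r i j k = tFun r i j k := by
  simp [tPerm, h]

theorem tPerm_i {r : ℕ} {i j : ℤ} (h : ¬ (r : ℤ) ∣ (j - i)) (k : ℤ) (hk : (r : ℤ) ∣ k - i) :
    tPerm r i j k = j + (k - i) := by
  rw [tPerm_apply h]; simp [tFun, hk]

theorem ndvd_aux {r : ℕ} {i j : ℤ} (h : ¬ (r : ℤ) ∣ (j - i)) {k : ℤ} (hk : (r : ℤ) ∣ k - j) :
    ¬ (r : ℤ) ∣ k - i := by
  intro h2
  apply h
  have := h2.sub hk
  have e : k - i - (k - j) = j - i := by ring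
  rwa [e] at this

theorem tPerm_j {r : ℕ} {i j : ℤ} (h : ¬ (r : ℤ) ∣ (j - i)) (k : ℤ) (hk : (r : ℤ) ∣ k - j) :
    tPerm r i j k = i + (k - j) := by
  rw [tPerm_apply h]; simp [tFun, hk, ndvd_aux h hk]

theorem tPerm_o {r : ℕ} {i j : ℤ} (k : ℤ) (h1 : ¬ (r : ℤ) ∣ k - i)
    (h2 : ¬ (r : ℤ) ∣ k - j) : tPerm r i j k = k := by
  by_cases h : (r : ℤ) ∣ (j - i)
  · simp [tPerm, h]
  · rw [tPerm_apply h]; simp [tFun, h1, h2]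

theorem mem_aff {r : ℕ} {w : Equiv.Perm ℤ} : w ∈ AffSym r ↔ ∀ i : ℤ, w (i + r) = w i + r :=
  Iff.rfl

theorem aff_add_mul {r : ℕ} {w : Equiv.Perm ℤ} (hw : w ∈ AffSym r) (i k : ℤ) :
    w (i + r * k) = w i + r * k := by
  have hw' := mem_aff.1 hw
  induction k using Int.induction_on with
  | zero => simp
  | succ k ih =>
    have : i + r * ((k : ℤ) + 1) = (i + r * k) + r := by ring
    rw [this, hw', ih]; ring
  | pred k ih =>
    have h2 := hw' (i + r * (-(k : ℤ) - 1))
    have : i + r * (-(k : ℤ) - 1) + r = i + r * (-(k : ℤ)) := by ring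
    rw [this, ih] at h2
    linarith

theorem aff_of_dvd {r : ℕ} {w : Equiv.Perm ℤ} (hw : w ∈ AffSym r) {i k : ℤ}
    (h : (r : ℤ) ∣ k - i) : w k = w i + (k - i) := by
  obtain ⟨c, hc⟩ := h
  have : k = i + r * c := by linarith
  rw [this, aff_add_mul hw]; ring

theorem aff_dvd {r : ℕ} {w : Equiv.Perm ℤ} (hw : w ∈ AffSym r) {i k : ℤ} :
    (r : ℤ) ∣ w k - w i ↔ (r : ℤ) ∣ k - i := by
  constructor
  · intro h
    have := aff_of_dvd ((AffSym r).inv_mem hw) h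
    simp at this
    rw [this]; simpa using h
  · intro h
    rw [aff_of_dvd hw h]; simpa using h

theorem tPerm_aff (r : ℕ) (i j : ℤ) : tPerm r i j ∈ AffSym r := by
  rw [mem_aff]
  intro k
  by_cases h : (r : ℤ) ∣ (j - i)
  · simp [tPerm, h]
  · have e1 : k + r - i = (k - i) + r := by ring
    have e2 : k + r - j = (k - j) + r := by ring
    rw [tPerm_apply h, tPerm_apply h]
    simp only [tFun, e1, e2, dvd_add_self_right]
    split_ifs <;> ring

theorem tPerm_mul_self (r : ℕ) (i j : ℤ) : tPerm r i j * tPerm r i j = 1 := by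
  by_cases h : (r : ℤ) ∣ (j - i)
  · simp [tPerm, h]
  · ext k
    simp only [Equiv.Perm.mul_apply, tPerm_apply h]
    exact tFun_invol r i j h k

theorem tPerm_tPerm (r : ℕ) (i j k : ℤ) : tPerm r i j (tPerm r i j k) = k := by
  rw [← Equiv.Perm.mul_apply, tPerm_mul_self]; rfl

theorem tPerm_inv (r : ℕ) (i j : ℤ) : (tPerm r i j)⁻¹ = tPerm r i j :=
  inv_eq_of_mul_eq_one_left (tPerm_mul_self r i j)

theorem tPerm_conj {r : ℕ} {w : Equiv.Perm ℤ} (hw : w ∈ AffSym r) (i j : ℤ) :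
    w * tPerm r i j = tPerm r (w i) (w j) * w := by
  ext k
  simp only [Equiv.Perm.mul_apply]
  by_cases h : (r : ℤ) ∣ (j - i)
  · have h' := (aff_dvd hw).2 h
    simp [tPerm, h, h']
  · have h' : ¬ (r : ℤ) ∣ w j - w i := fun hh => h ((aff_dvd hw).1 hh)
    by_cases h1 : (r : ℤ) ∣ k - i
    · rw [tPerm_i h k h1, tPerm_i h' _ ((aff_dvd hw).2 h1), aff_of_dvd hw h1,
        aff_of_dvd hw (i := j) (by simpa using h1)]
      ring
    · by_cases h2 : (r : ℤ) ∣ k - j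
      · rw [tPerm_j h k h2, tPerm_j h' _ ((aff_dvd hw).2 h2), aff_of_dvd hw h2,
          aff_of_dvd hw (i := i) (by simpa using h2)]
        ring
      · rw [tPerm_o k h1 h2, tPerm_o _ (fun hh => h1 ((aff_dvd hw).1 hh))
          (fun hh => h2 ((aff_dvd hw).1 hh))]

theorem tPerm_translate {r : ℕ} {i j i' j' : ℤ} (h : (r : ℤ) ∣ i' - i) (e : i' - i = j' - j) :
    tPerm r i' j' = tPerm r i j := by
  obtain ⟨c, hc⟩ := h
  have hi : i' = i + r * c := by linarith
  have hj : j' = j + r * c := by linarith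
  subst hi hj
  ext k
  by_cases h : (r : ℤ) ∣ (j - i)
  · have : (r : ℤ) ∣ (j + r * c - (i + r * c)) := by simpa using h
    rw [tPerm, tPerm, dif_pos h, dif_pos this]
  · have h' : ¬ (r : ℤ) ∣ (j + r * c - (i + r * c)) := by simpa using h
    have e1 : k - (i + r * c) = (k - i) - r * c := by ring
    have e2 : k - (j + r * c) = (k - j) - r * c := by ring
    have e3 : ∀ x : ℤ, (r : ℤ) ∣ x - r * c ↔ (r : ℤ) ∣ x := fun x =>
      (Int.dvd_iff_dvd_of_dvd_sub (by simp))
    rw [tPerm_apply h, tPerm_apply h']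
    simp only [tFun, e1, e2, e3]
    split_ifs <;> ring

/-- adjacent transpositions at any position are Coxeter generators. -/
theorem sGen_any {r : ℕ} (hr : 1 ≤ r) (p : ℤ) : tPerm r p (p + 1) ∈ sGen r := by
  have hr' : (0 : ℤ) < r := by exact_mod_cast hr
  refine ⟨(p - 1) % r + 1, ?_, ?_, ?_⟩
  · have := Int.emod_nonneg (p - 1) hr'.ne'; omega
  · have := Int.emod_lt_of_pos (p - 1) hr'; omega
  · apply tPerm_translate
    · refine ⟨(p - 1) / r, ?_⟩
      have := Int.emod_add_mul_ediv (p - 1) r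
      linarith
    · ring

def HasWord (r : ℕ) (x : Equiv.Perm ℤ) (m : ℕ) : Prop :=
  ∃ l : List (Equiv.Perm ℤ), l.length = m ∧ (∀ s ∈ l, s ∈ sGen r) ∧ l.prod = x

theorem HasWord.mul {r : ℕ} {x y : Equiv.Perm ℤ} {m k : ℕ} (h1 : HasWord r x m)
    (h2 : HasWord r y k) : HasWord r (x * y) (m + k) := by
  obtain ⟨l1, rfl, ha, rfl⟩ := h1
  obtain ⟨l2, rfl, hb, rfl⟩ := h2
  refine ⟨l1 ++ l2, by simp, ?_, by simp⟩
  intro s hs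
  rcases List.mem_append.1 hs with h | h
  exacts [ha s h, hb s h]

theorem HasWord.gen {r : ℕ} {s : Equiv.Perm ℤ} (h : s ∈ sGen r) : HasWord r s 1 :=
  ⟨[s], by simp, by simpa using h, by simp⟩

theorem lenW_le {r : ℕ} {x : Equiv.Perm ℤ} {m : ℕ} (h : HasWord r x m) : lenW r x ≤ m :=
  Nat.sInf_le h

theorem lenW_word {r : ℕ} {x : Equiv.Perm ℤ} {m : ℕ} (h : HasWord r x m) :
    HasWord r x (lenW r x) :=
  Nat.sInf_mem (s := {m | HasWord r x m}) ⟨m, h⟩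

theorem lenW_word_of_pos {r : ℕ} {x : Equiv.Perm ℤ} (h : 0 < lenW r x) :
    HasWord r x (lenW r x) := by
  have : {m | HasWord r x m}.Nonempty := by
    apply Nat.nonempty_of_pos_sInf; exact h
  obtain ⟨m, hm⟩ := this
  exact lenW_word hm

theorem flip_adj {r : ℕ} {p i j : ℤ} (hij : i < j) (h : ¬ (r : ℤ) ∣ j - i)
    (hf : tPerm r p (p + 1) j < tPerm r p (p + 1) i) :
    tPerm r i j = tPerm r p (p + 1) := by
  by_cases hp : (r : ℤ) ∣ (p + 1 - p)
  · rw [tPerm, dif_pos hp] at hf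
    simp only [Equiv.Perm.coe_one, id_eq] at hf
    omega
  rw [tPerm_apply hp, tPerm_apply hp] at hf
  simp only [tFun] at hf
  by_cases a1 : (r : ℤ) ∣ i - p
  · have b1 : ¬ (r : ℤ) ∣ j - p := fun hh => h (by
      have := hh.sub a1
      have e : j - p - (i - p) = j - i := by ring
      rwa [e] at this)
    rw [if_pos a1, if_neg b1] at hf
    split_ifs at hf with b2
    · have : j = i + 1 := by omega
      subst this
      exact tPerm_translate a1 (by ring)
    · have : j = i + 1 := by omega
      subst this
      exact tPerm_translate a1 (by ring)
  · rw [if_neg a1] at hf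
    split_ifs at hf <;> omega

theorem exchange {r : ℕ} (l : List (Equiv.Perm ℤ)) : ∀ (_ : ∀ s ∈ l, s ∈ sGen r)
    (i j : ℤ) (_ : i < j) (_ : ¬ (r : ℤ) ∣ j - i) (_ : l.prod⁻¹ j < l.prod⁻¹ i),
    ∃ m, m < l.length ∧ HasWord r (tPerm r i j * l.prod) m := by
  induction l with
  | nil => intro _ i j hij _ hf; simp at hf; omega
  | cons s l ih =>
    intro hl i j hij hd hf
    obtain ⟨p, hp1, hp2, hs⟩ := hl s (by simp)
    have hl' : ∀ s ∈ l, s ∈ sGen r := fun s hs => hl s (by simp [hs])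
    have hsa : s ∈ AffSym r := hs ▸ tPerm_aff _ _ _
    have hsi : s⁻¹ = s := by rw [hs, tPerm_inv]
    have hss : s * s = 1 := by rw [hs, tPerm_mul_self]
    rw [List.prod_cons, mul_inv_rev, Equiv.Perm.mul_apply, Equiv.Perm.mul_apply, hsi] at hf
    rcases lt_trichotomy (s i) (s j) with h | h | h
    · obtain ⟨m, hm, hw⟩ := ih hl' (s i) (s j) h (fun hh => hd ((aff_dvd hsa).1 hh)) hf
      refine ⟨1 + m, by simp; omega, ?_⟩
      have := (HasWord.gen (hl s (by simp))).mul hw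
      rw [← mul_assoc, tPerm_conj hsa] at this
      have e : ∀ k, s (s k) = k := fun k => by rw [← Equiv.Perm.mul_apply, hss]; rfl
      rw [e, e] at this
      rwa [List.prod_cons, ← mul_assoc]
    · exact absurd (s.injective h) hij.ne
    · refine ⟨l.length, by simp, l, rfl, hl', ?_⟩
      rw [hs] at h
      rw [flip_adj hij hd h, ← hs, List.prod_cons, ← mul_assoc, hss, one_mul]

theorem tPerm_word {r : ℕ} (hr : 1 ≤ r) (N : ℕ) : ∀ (i j : ℤ) (_ : i < j)
    (_ : ¬ (r : ℤ) ∣ j - i) (_ : j - i ≤ N), ∃ m, HasWord r (tPerm r i j) m := by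
  induction N with
  | zero => intro i j h _ h2; push_cast at h2; omega
  | succ N ih =>
    intro i j hij hd hN
    push_cast at hN
    by_cases h1 : j = i + 1
    · subst h1; exact ⟨1, HasWord.gen (sGen_any hr i)⟩
    have hr1 : ¬ (r : ℤ) ∣ 1 := by
      intro hh; exact hd (hh.trans (one_dvd _))
    have hp : ¬ (r : ℤ) ∣ i + 1 - i := by simpa using hr1
    have hs := HasWord.gen (sGen_any hr i)
    have hsa := tPerm_aff r i (i + 1)
    have key : ∀ a b : ℤ, (∃ m, HasWord r (tPerm r a b) m) →
        ∃ m, HasWord r (tPerm r (tPerm r i (i + 1) a) (tPerm r i (i + 1) b)) m := by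
      rintro a b ⟨m, hm⟩
      have := (hs.mul hm).mul hs
      rw [tPerm_conj hsa, mul_assoc, tPerm_mul_self, mul_one] at this
      exact ⟨_, this⟩
    by_cases h2 : (r : ℤ) ∣ j - (i + 1)
    · have h3 : ¬ (r : ℤ) ∣ j - 1 - (i + 1) := by
        intro hh
        apply hr1
        have := h2.sub hh
        have e : j - (i + 1) - (j - 1 - (i + 1)) = 1 := by ring
        rwa [e] at this
      have h4 : j - 1 ≠ i + 1 := by
        intro hh; apply h3; rw [hh]; simp
      have := key _ _ (ih (i + 1) (j - 1) (by omega) h3 (by omega))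
      rw [tPerm_j hp (i + 1) (by simp), tPerm_i hp (j - 1) (by
        have e : j - 1 - i = j - (i + 1) := by ring
        rwa [e])] at this
      convert this using 4 <;> ring
    · have := key _ _ (ih (i + 1) j (by omega) h2 (by omega))
      rw [tPerm_j hp (i + 1) (by simp), tPerm_o j hd h2] at this
      convert this using 4
      ring

theorem lt_of_len {r : ℕ} (hr : 1 ≤ r) {x : Equiv.Perm ℤ} {i j : ℤ} (hij : i < j)
    (hd : ¬ (r : ℤ) ∣ j - i) (hlen : lenW r x < lenW r (tPerm r i j * x)) :
    x⁻¹ i < x⁻¹ j := by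
  by_contra hcon
  have hne : x⁻¹ i ≠ x⁻¹ j := fun hh => hij.ne (x⁻¹.injective hh)
  have hlt : x⁻¹ j < x⁻¹ i := by omega
  obtain ⟨m, hm⟩ := tPerm_word hr (j - i).toNat i j hij hd (by omega)
  have h1 := hm.mul (lenW_word_of_pos (lt_of_le_of_lt (Nat.zero_le _) hlen))
  rw [← mul_assoc, tPerm_mul_self, one_mul] at h1
  obtain ⟨l, hl1, hl2, hl3⟩ := lenW_word h1
  obtain ⟨k, hk, hw⟩ := exchange l hl2 i j hij hd (by rw [hl3]; exact hlt)
  rw [hl3] at hw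
  have := lenW_le hw
  omega

end JProof
namespace JProof

theorem sum_Icc_succ (lam : ℤ → ℕ) (k : ℤ) (hk : 0 ≤ k) :
    ∑ t ∈ Finset.Icc (1 : ℤ) (k + 1), (lam t : ℤ) =
      ∑ t ∈ Finset.Icc (1 : ℤ) k, (lam t : ℤ) + lam (k + 1) := by
  have : Finset.Icc (1 : ℤ) (k + 1) = insert (k + 1) (Finset.Icc (1 : ℤ) k) := by
    ext x; simp only [Finset.mem_Icc, Finset.mem_insert]; omega
  rw [this, Finset.sum_insert (by simp), add_comm]

section blocks

variable {n r : ℕ} {lam : ℤ → ℕ}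

theorem bnd_add_n (hn : 1 ≤ n) (m : ℤ) : bnd n r lam (m + n) = bnd n r lam m + r := by
  have hn' : (n : ℤ) ≠ 0 := by omega
  have e : m + n - 1 = (m - 1) + n := by ring
  simp only [bnd, e, Int.add_emod_right]
  rw [Int.add_ediv_of_dvd_right (dvd_refl _), Int.ediv_self hn']
  ring

theorem bnd_pred (hn : 1 ≤ n) (hlam : lam ∈ LambdaSet n r) (m : ℤ) :
    bnd n r lam (m - 1) =
      ((m - 1) / n) * r + ∑ t ∈ Finset.Icc (1 : ℤ) ((m - 1) % n), (lam t : ℤ) := by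
  have hn' : (0 : ℤ) < n := by omega
  have h0 := Int.emod_nonneg (m - 1) hn'.ne'
  have h1 := Int.emod_lt_of_pos (m - 1) hn'
  have h2 := Int.emod_add_mul_ediv (m - 1) n
  set q := (m - 1) / n with hq
  set i := (m - 1) % n with hi
  have hsum : ∑ t ∈ Finset.Icc (1 : ℤ) n, (lam t : ℤ) = r := by exact_mod_cast hlam.2
  by_cases hz : i = 0
  · have e : m - 1 - 1 = (n - 1 : ℤ) + n * (q - 1) := by rw [← h2, hz]; ring
    have e1 : (m - 1 - 1) / n = q - 1 := by
      rw [e, Int.add_mul_ediv_left _ _ hn'.ne', Int.ediv_eq_zero_of_lt (by omega) (by omega)]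
      ring
    have e2 : (m - 1 - 1) % n = n - 1 := by
      rw [e, Int.add_mul_emod_self_left, Int.emod_eq_of_lt (by omega) (by omega)]
    rw [bnd, e1, e2, hz]
    simp only [sub_add_cancel, hsum, Finset.Icc_eq_empty_of_lt zero_lt_one, Finset.sum_empty]
    ring
  · have e : m - 1 - 1 = (i - 1) + n * q := by rw [← h2]; ring
    have e1 : (m - 1 - 1) / n = q := by
      rw [e, Int.add_mul_ediv_left _ _ hn'.ne', Int.ediv_eq_zero_of_lt (by omega) (by omega)]
      ring
    have e2 : (m - 1 - 1) % n = i - 1 := by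
      rw [e, Int.add_mul_emod_self_left, Int.emod_eq_of_lt (by omega) (by omega)]
    rw [bnd, e1, e2, sub_add_cancel]

theorem bnd_step (hn : 1 ≤ n) (hlam : lam ∈ LambdaSet n r) (m : ℤ) :
    bnd n r lam (m - 1) ≤ bnd n r lam m := by
  have hn' : (0 : ℤ) < n := by omega
  rw [bnd_pred hn hlam, bnd, sum_Icc_succ _ _ (Int.emod_nonneg (m - 1) hn'.ne')]
  omega

theorem bnd_mono (hn : 1 ≤ n) (hlam : lam ∈ LambdaSet n r) : Monotone (bnd n r lam) := by
  apply monotone_int_of_le_succ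
  intro m
  have := bnd_step hn hlam (m + 1)
  simpa using this

theorem mem_Rset (hn : 1 ≤ n) (hlam : lam ∈ LambdaSet n r) (m a : ℤ) :
    a ∈ Rset n r lam m ↔ bnd n r lam (m - 1) < a ∧ a ≤ bnd n r lam m := by
  rw [bnd_pred hn hlam]; rfl

theorem bnd_zero (hn : 1 ≤ n) (hlam : lam ∈ LambdaSet n r) : bnd n r lam 0 = 0 := by
  have := bnd_pred hn hlam 1
  simpa using this

theorem bnd_n (hn : 1 ≤ n) (hlam : lam ∈ LambdaSet n r) : bnd n r lam n = r := by
  have := bnd_add_n (r := r) (lam := lam) hn 0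
  rw [bnd_zero hn hlam] at this
  simpa using this

theorem bnd_add_mul (hn : 1 ≤ n) (m k : ℤ) : bnd n r lam (m + n * k) = bnd n r lam m + r * k := by
  induction k using Int.induction_on with
  | zero => simp
  | succ k ih =>
    have : m + n * ((k : ℤ) + 1) = (m + n * k) + n := by ring
    rw [this, bnd_add_n hn, ih]; ring
  | pred k ih =>
    have h2 := bnd_add_n (r := r) (lam := lam) hn (m + n * (-(k : ℤ) - 1))
    have : m + n * (-(k : ℤ) - 1) + n = m + n * (-(k : ℤ)) := by ring
    rw [this, ih] at h2
    linarith

theorem exists_blk (hn : 1 ≤ n) (hr : 1 ≤ r) (hlam : lam ∈ LambdaSet n r) (a : ℤ) :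
    ∃ m, ∀ k, m ≤ k ↔ a ≤ bnd n r lam k := by
  have hm := bnd_mono hn hlam
  have h1 : ∀ k : ℤ, bnd n r lam (n * k) = r * k := fun k => by
    have := bnd_add_mul (r := r) (lam := lam) hn 0 k
    rwa [bnd_zero hn hlam, zero_add, zero_add] at this
  have hr' : (1 : ℤ) ≤ r := by exact_mod_cast hr
  obtain ⟨m, hm1, hm2⟩ := Int.exists_least_of_bdd (P := fun k => a ≤ bnd n r lam k)
    ⟨n * (-|a| - 1), fun z hz => by
      by_contra hc
      have h3 := hm (le_of_not_ge hc)
      rw [h1] at h3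
      have := neg_abs_le a
      have := abs_nonneg a
      nlinarith⟩
    ⟨n * |a|, by
      rw [h1]
      have := le_abs_self a
      have := abs_nonneg a
      nlinarith⟩
  exact ⟨m, fun k => ⟨fun h => hm1.trans (hm h), fun h => hm2 k h⟩⟩

end blocks

/-- the index of the block containing a given integer -/
noncomputable def blk (n r : ℕ) (lam : ℤ → ℕ) (a : ℤ) : ℤ :=
  if h : ∃ m, ∀ k, m ≤ k ↔ a ≤ bnd n r lam k then h.choose else 0

section blocks2
variable {n r : ℕ} {lam : ℤ → ℕ}

theorem blk_le (hn : 1 ≤ n) (hr : 1 ≤ r) (hlam : lam ∈ LambdaSet n r) (a k : ℤ) :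
    blk n r lam a ≤ k ↔ a ≤ bnd n r lam k := by
  have h := exists_blk hn hr hlam a
  rw [blk, dif_pos h]
  exact h.choose_spec k

theorem le_blk (hn : 1 ≤ n) (hr : 1 ≤ r) (hlam : lam ∈ LambdaSet n r) (a k : ℤ) :
    k ≤ blk n r lam a ↔ bnd n r lam (k - 1) < a := by
  have := blk_le hn hr hlam a (k - 1)
  omega

theorem mem_Rset_iff (hn : 1 ≤ n) (hr : 1 ≤ r) (hlam : lam ∈ LambdaSet n r) (m a : ℤ) :
    a ∈ Rset n r lam m ↔ blk n r lam a = m := by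
  rw [mem_Rset hn hlam, ← blk_le hn hr hlam, ← le_blk hn hr hlam]
  omega

theorem blk_mono (hn : 1 ≤ n) (hr : 1 ≤ r) (hlam : lam ∈ LambdaSet n r) :
    Monotone (blk n r lam) := by
  intro a b hab
  rw [blk_le hn hr hlam]
  exact hab.trans ((blk_le hn hr hlam _ _).1 le_rfl)

theorem Rset_eq (hn : 1 ≤ n) (hlam : lam ∈ LambdaSet n r) (m : ℤ) :
    Rset n r lam m = Set.Ioc (bnd n r lam (m - 1)) (bnd n r lam m) := by
  ext a; exact mem_Rset hn hlam m a

end blocks2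

theorem fiber_sum {α ι : Type*} (F : α → ι) (P : Set ι) (hfin : (F ⁻¹' P).Finite) :
    ∑ᶠ (p : ι) (_ : p ∈ P), (F ⁻¹' {p}).ncard = (F ⁻¹' P).ncard := by
  have hsub : ∀ p ∈ P, (F ⁻¹' {p}) ⊆ F ⁻¹' P := by
    intro p hp a ha
    have : F a = p := ha
    simpa [this] using hp
  have e1 : ∑ᶠ (p : ι) (_ : p ∈ P), (F ⁻¹' {p}).ncard =
      ∑ p ∈ hfin.toFinset.image F, (F ⁻¹' {p}).ncard := by
    rw [finsum_mem_eq_sum_of_inter_support_eq]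
    ext p
    simp only [Set.mem_inter_iff, Function.mem_support, Finset.coe_image, Set.Finite.coe_toFinset]
    constructor
    · rintro ⟨hp, hne⟩
      refine ⟨?_, hne⟩
      have := Set.nonempty_of_ncard_ne_zero hne
      obtain ⟨a, ha⟩ := this
      exact ⟨a, hsub p hp ha, ha⟩
    · rintro ⟨⟨a, ha, rfl⟩, hne⟩
      exact ⟨ha, hne⟩
  rw [e1, Set.ncard_eq_toFinset_card _ hfin,
    Finset.card_eq_sum_card_fiberwise (f := F) (t := hfin.toFinset.image F)
      (fun a ha => by simp only [Finset.coe_image]; exact ⟨a, ha, rfl⟩)]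
  apply Finset.sum_congr rfl
  intro p hp
  have hp' : p ∈ P := by
    obtain ⟨a, ha, rfl⟩ := Finset.mem_image.1 hp
    simpa using ha
  rw [← Set.ncard_coe_finset]
  congr 1
  ext a
  simp only [Finset.coe_filter, Set.Finite.mem_toFinset, Set.mem_ofPred_eq]
  exact ⟨fun h => ⟨hsub p hp' h, h⟩, fun h => h.2⟩

theorem aff_bdd {r : ℕ} (hr : 1 ≤ r) {w : Equiv.Perm ℤ} (hw : w ∈ AffSym r) :
    ∃ M : ℤ, ∀ b, |w b - b| ≤ M := by
  have hr' : (0 : ℤ) < r := by exact_mod_cast hr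
  refine ⟨∑ i ∈ Finset.Ico (0 : ℤ) r, |w i - i|, fun b => ?_⟩
  have h2 := Int.emod_add_mul_ediv b r
  have e : w b - b = w (b % r) - b % r := by
    have := aff_add_mul hw (b % r) (b / r)
    rw [h2] at this
    rw [this]; linarith
  rw [e]
  exact Finset.single_le_sum (f := fun i => |w i - i|) (fun i _ => abs_nonneg _)
    (Finset.mem_Ico.2 ⟨Int.emod_nonneg _ hr'.ne', Int.emod_lt_of_pos _ hr'⟩)

/-- upper-right count set -/
def SU (x : Equiv.Perm ℤ) (P Q : ℤ) : Set ℤ := {b | b ≤ P ∧ Q < x⁻¹ b}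
/-- lower-left count set -/
def SL (x : Equiv.Perm ℤ) (P Q : ℤ) : Set ℤ := {b | P < b ∧ x⁻¹ b ≤ Q}

theorem SU_fin {r : ℕ} (hr : 1 ≤ r) {x : Equiv.Perm ℤ} (hx : x ∈ AffSym r) (P Q : ℤ) :
    (SU x P Q).Finite := by
  obtain ⟨M, hM⟩ := aff_bdd hr ((AffSym r).inv_mem hx)
  apply (Set.finite_Icc (Q - M) P).subset
  rintro b ⟨h1, h2⟩
  have := abs_le.1 (hM b)
  exact ⟨by omega, h1⟩

theorem SL_fin {r : ℕ} (hr : 1 ≤ r) {x : Equiv.Perm ℤ} (hx : x ∈ AffSym r) (P Q : ℤ) :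
    (SL x P Q).Finite := by
  obtain ⟨M, hM⟩ := aff_bdd hr ((AffSym r).inv_mem hx)
  apply (Set.finite_Icc P (Q + M)).subset
  rintro b ⟨h1, h2⟩
  have := abs_le.1 (hM b)
  exact ⟨by omega, by omega⟩

theorem ncard_invol {t : Equiv.Perm ℤ} {S S' : Set ℤ} (hfin : S'.Finite)
    (h : ∀ b ∈ S, b ∉ S' → t b ∈ S' ∧ t b ∉ S) : S.ncard ≤ S'.ncard := by
  apply Set.ncard_le_ncard_of_injOn (fun b => if b ∈ S' then b else t b) _ _ hfin
  · intro b hb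
    by_cases hb' : b ∈ S'
    · simpa [hb'] using hb'
    · simpa [hb'] using (h b hb hb').1
  · intro a ha b hb hab
    by_cases ha' : a ∈ S' <;> by_cases hb' : b ∈ S' <;> simp only [ha', hb', if_true, if_false] at hab
    · exact hab
    · exact absurd (hab ▸ ha) (h b hb hb').2
    · exact absurd (hab ▸ hb) (h a ha ha').2
    · exact t.injective hab

theorem step_cases {r : ℕ} {x : Equiv.Perm ℤ} (hx : x ∈ AffSym r) {i j : ℤ} (hij : i < j)
    (hd : ¬ (r : ℤ) ∣ j - i) (hlt : x⁻¹ i < x⁻¹ j) (b : ℤ) :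
    tPerm r i j b = b ∨ (b < tPerm r i j b ∧ x⁻¹ b < x⁻¹ (tPerm r i j b)) ∨
      (tPerm r i j b < b ∧ x⁻¹ (tPerm r i j b) < x⁻¹ b) := by
  have hx' := (AffSym r).inv_mem hx
  by_cases h1 : (r : ℤ) ∣ b - i
  · right; left
    rw [tPerm_i hd b h1, aff_of_dvd hx' h1, aff_of_dvd hx' (i := j) (k := j + (b - i)) (by simpa using h1)]
    constructor <;> linarith
  · by_cases h2 : (r : ℤ) ∣ b - j
    · right; right
      rw [tPerm_j hd b h2, aff_of_dvd hx' h2, aff_of_dvd hx' (i := i) (k := i + (b - j)) (by simpa using h2)]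
      constructor <;> linarith
    · left; exact tPerm_o b h1 h2

theorem step_SU {r : ℕ} (hr : 1 ≤ r) {x : Equiv.Perm ℤ} (hx : x ∈ AffSym r) {i j : ℤ}
    (hij : i < j) (hd : ¬ (r : ℤ) ∣ j - i) (hlt : x⁻¹ i < x⁻¹ j) (P Q : ℤ) :
    (SU x P Q).ncard ≤ (SU (tPerm r i j * x) P Q).ncard := by
  apply ncard_invol (t := tPerm r i j)
    (SU_fin hr ((AffSym r).mul_mem (tPerm_aff _ _ _) hx) P Q)
  intro b hb hb'
  have hc := step_cases hx hij hd hlt b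
  simp only [SU, Set.mem_ofPred_eq, mul_inv_rev, tPerm_inv, Equiv.Perm.mul_apply,
    tPerm_tPerm] at *
  rcases hc with hc | hc | hc
  · rw [hc] at hb'; exact absurd hb hb'
  · omega
  · omega

theorem step_SL {r : ℕ} (hr : 1 ≤ r) {x : Equiv.Perm ℤ} (hx : x ∈ AffSym r) {i j : ℤ}
    (hij : i < j) (hd : ¬ (r : ℤ) ∣ j - i) (hlt : x⁻¹ i < x⁻¹ j) (P Q : ℤ) :
    (SL x P Q).ncard ≤ (SL (tPerm r i j * x) P Q).ncard := by
  apply ncard_invol (t := tPerm r i j)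
    (SL_fin hr ((AffSym r).mul_mem (tPerm_aff _ _ _) hx) P Q)
  intro b hb hb'
  have hc := step_cases hx hij hd hlt b
  simp only [SL, Set.mem_ofPred_eq, mul_inv_rev, tPerm_inv, Equiv.Perm.mul_apply,
    tPerm_tPerm] at *
  rcases hc with hc | hc | hc
  · rw [hc] at hb'; exact absurd hb hb'
  · omega
  · omega

theorem chain {r : ℕ} (hr : 1 ≤ r) {y : Equiv.Perm ℤ} (hy : y ∈ AffSym r)
    (l : List (Equiv.Perm ℤ)) : ∀ (_ : ∀ t ∈ l, t ∈ TSet r)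
    (_ : ∀ k, k < l.length →
      lenW r ((l.drop (k + 1)).prod * y) < lenW r ((l.drop k).prod * y)),
    l.prod * y ∈ AffSym r ∧ ∀ P Q, (SU y P Q).ncard ≤ (SU (l.prod * y) P Q).ncard ∧
      (SL y P Q).ncard ≤ (SL (l.prod * y) P Q).ncard := by
  induction l with
  | nil => intro _ _; simpa using hy
  | cons t l ih =>
    intro ht hlen
    obtain ⟨hm, hPQ⟩ := ih (fun t h => ht t (by simp [h])) (fun k hk => by
      have := hlen (k + 1) (by simpa using hk)
      simpa using this)
    obtain ⟨i, j, hij, hd, rfl⟩ := ht t (by simp)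
    have h0 := hlen 0 (by simp)
    simp only [zero_add, List.drop_succ_cons, List.drop_zero, List.prod_cons, mul_assoc] at h0
    have hlt := lt_of_len hr hij hd h0
    rw [List.prod_cons, mul_assoc]
    exact ⟨(AffSym r).mul_mem (tPerm_aff _ _ _) hm, fun P Q =>
      ⟨(hPQ P Q).1.trans (step_SU hr hm hij hd hlt P Q),
       (hPQ P Q).2.trans (step_SL hr hm hij hd hlt P Q)⟩⟩

theorem rho_zpow (a b : ℤ) : (rhoP ^ a) b = b + a := by
  have h1 : ∀ b, rhoP b = b + 1 := fun b => rfl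
  have h2 : ∀ b, rhoP⁻¹ b = b - 1 := fun b => by
    rw [Equiv.Perm.inv_eq_iff_eq, h1]; ring
  induction a using Int.induction_on generalizing b with
  | zero => simp
  | succ k ih => rw [zpow_add_one, Equiv.Perm.mul_apply, ih, h1]; ring
  | pred k ih => rw [zpow_sub_one, Equiv.Perm.mul_apply, ih, h2]; ring

theorem rho_zpow_inv (a b : ℤ) : (rhoP ^ a)⁻¹ b = b - a := by
  rw [← zpow_neg, rho_zpow]; ring

theorem rho_aff (r : ℕ) (a : ℤ) : rhoP ^ a ∈ AffSym r := by
  rw [mem_aff]; intro i; rw [rho_zpow, rho_zpow]; ring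

theorem SU_rho (x : Equiv.Perm ℤ) (a P Q : ℤ) :
    (SU ((rhoP ^ a)⁻¹ * x) (P - a) Q).ncard = (SU x P Q).ncard := by
  rw [← Set.ncard_image_of_injective _ (add_left_injective a)]
  congr 1
  ext b
  simp only [SU, Set.mem_image, Set.mem_ofPred_eq, mul_inv_rev, inv_inv, Equiv.Perm.mul_apply,
    rho_zpow]
  constructor
  · rintro ⟨c, ⟨h1, h2⟩, rfl⟩; exact ⟨by omega, h2⟩
  · rintro ⟨h1, h2⟩; exact ⟨b - a, ⟨by omega, by simpa using h2⟩, by simp⟩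

theorem SL_rho (x : Equiv.Perm ℤ) (a P Q : ℤ) :
    (SL ((rhoP ^ a)⁻¹ * x) (P - a) Q).ncard = (SL x P Q).ncard := by
  rw [← Set.ncard_image_of_injective _ (add_left_injective a)]
  congr 1
  ext b
  simp only [SL, Set.mem_image, Set.mem_ofPred_eq, mul_inv_rev, inv_inv, Equiv.Perm.mul_apply,
    rho_zpow]
  constructor
  · rintro ⟨c, ⟨h1, h2⟩, rfl⟩; exact ⟨by omega, h2⟩
  · rintro ⟨h1, h2⟩; exact ⟨b - a, ⟨by omega, by simpa using h2⟩, by simp⟩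

theorem bruhat_counts {r : ℕ} (hr : 1 ≤ r) {y d : Equiv.Perm ℤ} (hy : y ∈ AffSym r)
    (h : abruhatLE r y d) (P Q : ℤ) :
    (SU y P Q).ncard ≤ (SU d P Q).ncard ∧ (SL y P Q).ncard ≤ (SL d P Q).ncard := by
  obtain ⟨ha, l, hl, hw, hlen⟩ := h
  have := (chain hr ((AffSym r).mul_mem ((AffSym r).inv_mem (rho_aff r _)) hy) l hl hlen).2
    (P - shiftIdx r y) Q
  rw [← hw, ← ha, SU_rho, SU_rho, SL_rho, SL_rho] at this
  exact this

end JProof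
namespace JProof

theorem per_dvd {r : ℕ} {h : ℤ → ℤ} (hp : ∀ k, h (k + r) = h k) (a c : ℤ) :
    h (a + r * c) = h a := by
  induction c using Int.induction_on with
  | zero => simp
  | succ k ih =>
    have : a + r * ((k : ℤ) + 1) = (a + r * k) + r := by ring
    rw [this, hp, ih]
  | pred k ih =>
    have h2 := hp (a + r * (-(k : ℤ) - 1))
    have : a + r * (-(k : ℤ) - 1) + r = a + r * (-(k : ℤ)) := by ring
    rw [this, ih] at h2
    exact h2.symm

theorem red_spec {r : ℕ} (hr : 1 ≤ r) (a : ℤ) :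
    ((a - 1) % r + 1) ∈ Finset.Icc (1 : ℤ) r ∧ ∃ c, a = ((a - 1) % r + 1) + r * c := by
  have hr' : (0 : ℤ) < r := by exact_mod_cast hr
  have h0 := Int.emod_nonneg (a - 1) hr'.ne'
  have h1 := Int.emod_lt_of_pos (a - 1) hr'
  have h2 := Int.emod_add_mul_ediv (a - 1) r
  exact ⟨Finset.mem_Icc.2 ⟨by omega, by omega⟩, (a - 1) / r, by linarith⟩

theorem red_uniq {r : ℕ} (a b c : ℤ) (ha : a ∈ Finset.Icc (1 : ℤ) r)
    (hb : b = a + r * c) : (b - 1) % r + 1 = a := by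
  rw [Finset.mem_Icc] at ha
  have : b - 1 = (a - 1) + r * c := by rw [hb]; ring
  rw [this, Int.add_mul_emod_self_left, Int.emod_eq_of_lt (by omega) (by omega)]
  ring

theorem sum_periodic {r : ℕ} (hr : 1 ≤ r) {y : Equiv.Perm ℤ} (hy : y ∈ AffSym r)
    {h : ℤ → ℤ} (hp : ∀ k, h (k + r) = h k) :
    ∑ i ∈ Finset.Icc (1 : ℤ) r, h (y i) = ∑ i ∈ Finset.Icc (1 : ℤ) r, h i := by
  have hinv : ∀ (z : Equiv.Perm ℤ) (_ : z ∈ AffSym r) (a : ℤ) (_ : a ∈ Finset.Icc (1 : ℤ) r),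
      (z⁻¹ ((z a - 1) % r + 1) - 1) % r + 1 = a := by
    intro z hz a ha
    obtain ⟨_, c, hc⟩ := red_spec hr (z a)
    apply red_uniq a _ (-c) ha
    have : (z a - 1) % r + 1 = z a + r * (-c) := by linarith
    rw [this, aff_add_mul ((AffSym r).inv_mem hz)]
    simp
  refine Finset.sum_nbij' (fun i => (y i - 1) % r + 1) (fun i => (y⁻¹ i - 1) % r + 1)
    (fun a _ => (red_spec hr _).1) (fun a _ => (red_spec hr _).1) (fun a ha => hinv y hy a ha)
    (fun a ha => by simpa using hinv y⁻¹ ((AffSym r).inv_mem hy) a ha) ?_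
  intro a _
  obtain ⟨_, c, hc⟩ := red_spec hr (y a)
  conv_lhs => rw [hc]
  rw [per_dvd hp]

theorem adj_ndvd {r : ℕ} (hr : 2 ≤ r) (p : ℤ) : ¬ (r : ℤ) ∣ p + 1 - p := by
  have : p + 1 - p = 1 := by ring
  rw [this]
  intro h
  have := Int.le_of_dvd one_pos h
  omega

theorem small_dvd {r : ℕ} {a b : ℤ} (ha : 1 ≤ a) (ha' : a ≤ r) (hb : 1 ≤ b) (hb' : b ≤ r)
    (h : (r : ℤ) ∣ a - b) : a = b := by
  have := Int.eq_zero_of_abs_lt_dvd h (by rw [abs_lt]; omega)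
  omega

theorem adj_fin {r : ℕ} {p : ℤ} (hp : 1 ≤ p) (hp' : p + 1 ≤ r) {k : ℤ} (hk : 1 ≤ k)
    (hk' : k ≤ r) : tPerm r p (p + 1) k = if k = p then p + 1 else if k = p + 1 then p else k := by
  have hd := adj_ndvd (r := r) (by omega) p
  split_ifs with h1 h2
  · subst h1; rw [tPerm_i hd _ (by simp)]; ring
  · subst h2; rw [tPerm_j hd _ (by simp)]; ring
  · exact tPerm_o k (fun h => h1 (small_dvd hk hk' hp (by omega) h))
      (fun h => h2 (small_dvd hk hk' (by omega) (by omega) h))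

theorem shift_mul {r : ℕ} (hr : 1 ≤ r) {y : Equiv.Perm ℤ} (hy : y ∈ AffSym r) {p : ℤ}
    (hp : 1 ≤ p) (hp' : p + 1 ≤ r) :
    shiftIdx r (tPerm r p (p + 1) * y) = shiftIdx r y := by
  have h1 : ∑ i ∈ Finset.Icc (1 : ℤ) r, (tPerm r p (p + 1) (y i) - y i) =
      ∑ i ∈ Finset.Icc (1 : ℤ) r, (tPerm r p (p + 1) i - i) :=
    sum_periodic hr hy (h := fun k => tPerm r p (p + 1) k - k) (fun k => by
      simp only [mem_aff.1 (tPerm_aff r p (p + 1)) k]; ring)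
  have h2 : ∑ i ∈ Finset.Icc (1 : ℤ) r, tPerm r p (p + 1) i = ∑ i ∈ Finset.Icc (1 : ℤ) r, i := by
    have hm : ∀ a ∈ Finset.Icc (1 : ℤ) r, tPerm r p (p + 1) a ∈ Finset.Icc (1 : ℤ) r := by
      intro a ha
      rw [Finset.mem_Icc] at *
      rw [adj_fin hp hp' ha.1 ha.2]
      split_ifs <;> omega
    exact Finset.sum_nbij' (fun i => tPerm r p (p + 1) i) (fun i => tPerm r p (p + 1) i) hm hm
      (fun a _ => tPerm_tPerm _ _ _ _) (fun a _ => tPerm_tPerm _ _ _ _) (fun a _ => rfl)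
  have h3 : ∑ i ∈ Finset.Icc (1 : ℤ) r, ((tPerm r p (p + 1) * y) i - i) =
      ∑ i ∈ Finset.Icc (1 : ℤ) r, (y i - i) := by
    rw [Finset.sum_sub_distrib, Finset.sum_sub_distrib, h2, sub_self] at h1
    rw [Finset.sum_sub_distrib, Finset.sum_sub_distrib]
    simp only [Equiv.Perm.mul_apply]
    linarith
  rw [shiftIdx, shiftIdx, h3]

theorem DRep_lt {n r : ℕ} (hn : 1 ≤ n) (hr : 1 ≤ r) {lam : ℤ → ℕ} (hlam : lam ∈ LambdaSet n r)
    {d : Equiv.Perm ℤ} (hd : d ∈ DRep n r lam) {m p : ℤ} (hm : 1 ≤ m) (hm' : m ≤ n)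
    (h1 : p ∈ Rset n r lam m) (h2 : p + 1 ∈ Rset n r lam m) : d⁻¹ p < d⁻¹ (p + 1) := by
  have hmono := bnd_mono hn hlam
  have hran : ∀ i : ℤ, 1 ≤ i → i ≤ n → ∀ a ∈ Rset n r lam i, 1 ≤ a ∧ a ≤ r := by
    intro i hi hi' a ha
    rw [mem_Rset hn hlam] at ha
    have e1 := hmono (show (0 : ℤ) ≤ i - 1 by omega)
    have e2 := hmono hi'
    rw [bnd_zero hn hlam] at e1
    rw [bnd_n hn hlam] at e2
    omega
  have hp : 1 ≤ p := (hran m hm hm' p h1).1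
  have hp' : p + 1 ≤ r := (hran m hm hm' _ h2).2
  have hnd := adj_ndvd (r := r) (by omega) p
  have hY : tPerm r p (p + 1) ∈ YoungSet n r lam := by
    refine ⟨Subgroup.subset_closure ⟨p, hp, by omega, rfl⟩, ?_⟩
    intro i hi hi'
    have hsub : ∀ a ∈ Rset n r lam i, tPerm r p (p + 1) a ∈ Rset n r lam i := by
      intro a ha
      have := hran i hi hi' a ha
      rw [adj_fin hp hp' this.1 this.2]
      rw [mem_Rset_iff hn hr hlam] at *
      split_ifs with e1 e2
      · rw [← ha, e1, h1, h2]
      · rw [← ha, e2, h1, h2]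
      · exact ha
    apply Set.Subset.antisymm
    · rintro _ ⟨a, ha, rfl⟩; exact hsub a ha
    · intro a ha; exact ⟨_, hsub a ha, tPerm_tPerm _ _ _ _⟩
  have hlen := hd.2 _ hY
  have hs1 : 1 ≤ alen r (tPerm r p (p + 1)) := by
    have hsh : shiftIdx r (tPerm r p (p + 1)) = 0 := by
      have := shift_mul hr (AffSym r).one_mem hp hp'
      rw [mul_one] at this
      rw [this]; simp [shiftIdx]
    rw [alen, hsh, zpow_zero, inv_one, one_mul]
    by_contra hc
    have h0 : lenW r (tPerm r p (p + 1)) = 0 := by omega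
    have hw := lenW_word (HasWord.gen (sGen_any hr p))
    rw [h0] at hw
    obtain ⟨l, hl, _, hl3⟩ := hw
    rw [List.length_eq_zero_iff] at hl
    rw [hl, List.prod_nil] at hl3
    have e := tPerm_i hnd p (by simp)
    rw [← hl3] at e
    simp at e
  have hsh := shift_mul hr hd.1 hp hp'
  rw [alen, hsh] at hlen
  have ha : alen r d = lenW r ((rhoP ^ shiftIdx r d)⁻¹ * d) := rfl
  rw [ha] at hlen
  set a := shiftIdx r d
  rw [← mul_assoc, tPerm_conj ((AffSym r).inv_mem (rho_aff r a)), mul_assoc] at hlen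
  rw [rho_zpow_inv, rho_zpow_inv] at hlen
  have hfin := lt_of_len hr (show p - a < p + 1 - a by omega)
    (by rw [sub_sub_sub_cancel_right]; exact hnd) (lt_of_lt_of_eq (by omega) hlen.symm)
  simpa [mul_inv_rev, Equiv.Perm.mul_apply, rho_zpow] using hfin

theorem strict_of_step {f : ℤ → ℤ} {P Q : ℤ}
    (h : ∀ p, P < p → p + 1 ≤ Q → f p < f (p + 1)) : StrictMonoOn f (Set.Ioc P Q) := by
  intro a ha b hb hab
  have key : ∀ k : ℕ, a + k + 1 ≤ Q → f a < f (a + k + 1) := by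
    intro k
    induction k with
    | zero => intro hk; simpa using h a ha.1 (by simpa using hk)
    | succ k ih =>
      intro hk
      push_cast at *
      have e1 := ih (by omega)
      have e2 := h (a + k + 1) (by have := ha.1; omega) (by omega)
      have e3 : a + ((k : ℤ) + 1) + 1 = a + k + 1 + 1 := by ring
      rw [e3]; exact e1.trans e2
  have := key (b - a - 1).toNat (by have := hb.2; omega)
  have e : a + ((b - a - 1).toNat : ℤ) + 1 = b := by omega
  rwa [e] at this

theorem DRep_mono {n r : ℕ} (hn : 1 ≤ n) (hr : 1 ≤ r) {lam : ℤ → ℕ} (hlam : lam ∈ LambdaSet n r)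
    {d : Equiv.Perm ℤ} (hd : d ∈ DRep n r lam) (m : ℤ) :
    StrictMonoOn (d⁻¹ : Equiv.Perm ℤ) (Set.Ioc (bnd n r lam (m - 1)) (bnd n r lam m)) := by
  apply strict_of_step
  intro p h1 h2
  have hd' := (AffSym r).inv_mem hd.1
  obtain ⟨hmem, c, hc⟩ := red_spec hn m
  rw [Finset.mem_Icc] at hmem
  set m0 := (m - 1) % n + 1
  have e1 := bnd_add_mul (r := r) (lam := lam) hn (m0 - 1) c
  have e2 := bnd_add_mul (r := r) (lam := lam) hn m0 c
  have e3 : m0 - 1 + n * c = m - 1 := by rw [hc]; ring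
  rw [e3] at e1
  rw [← hc] at e2
  have := DRep_lt hn hr hlam hd hmem.1 hmem.2 (p := p - r * c)
    ((mem_Rset hn hlam _ _).2 ⟨by omega, by omega⟩) ((mem_Rset hn hlam _ _).2 ⟨by omega, by omega⟩)
  have f1 := aff_add_mul hd' (p - r * c) c
  have f2 := aff_add_mul hd' (p - r * c + 1) c
  have g1 : p - r * c + r * c = p := by ring
  have g2 : p - r * c + 1 + r * c = p + 1 := by ring
  rw [g1] at f1
  rw [g2] at f2
  omega

theorem mono_unique {f g : ℤ → ℤ} {P Q : ℤ} (hf : MonotoneOn f (Set.Ioc P Q))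
    (hg : MonotoneOn g (Set.Ioc P Q))
    (hc : ∀ v, (Set.Ioc P Q ∩ f ⁻¹' {v}).ncard = (Set.Ioc P Q ∩ g ⁻¹' {v}).ncard) :
    ∀ a ∈ Set.Ioc P Q, f a = g a := by
  have hmap : (Finset.Ioc P Q).val.map f = (Finset.Ioc P Q).val.map g := by
    ext v
    have aux : ∀ f : ℤ → ℤ, ((Finset.Ioc P Q).val.map f).count v =
        (Set.Ioc P Q ∩ f ⁻¹' {v}).ncard := by
      intro f
      rw [Multiset.count_map, ← Finset.filter_val, Finset.card_val, ← Set.ncard_coe_finset]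
      congr 1
      ext a
      simp [eq_comm]
    rw [aux, aux, hc]
  have key : ∀ f g : ℤ → ℤ, MonotoneOn f (Set.Ioc P Q) → MonotoneOn g (Set.Ioc P Q) →
      (Finset.Ioc P Q).val.map f = (Finset.Ioc P Q).val.map g →
      ∀ a ∈ Set.Ioc P Q, ¬ f a < g a := by
    intro f g hf hg hmap a ha hlt
    have h1 := congrArg (Multiset.countP (fun x => x ≤ f a)) hmap
    rw [Multiset.countP_map, Multiset.countP_map, ← Finset.filter_val, ← Finset.filter_val,
      Finset.card_val, Finset.card_val] at h1
    have h2 : (Finset.Ioc P Q).filter (fun x => g x ≤ f a) ⊂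
        (Finset.Ioc P Q).filter (fun x => f x ≤ f a) := by
      rw [Finset.ssubset_iff_of_subset]
      · refine ⟨a, ?_, ?_⟩
        · rw [Finset.mem_filter, Finset.mem_Ioc]; exact ⟨ha, le_rfl⟩
        · rw [Finset.mem_filter]; rintro ⟨_, h⟩; omega
      · intro x hx
        rw [Finset.mem_filter, Finset.mem_Ioc] at *
        refine ⟨hx.1, ?_⟩
        by_cases hxa : x ≤ a
        · exact hf hx.1 ha hxa
        · have := hg ha hx.1 (by omega)
          omega
    have := Finset.card_lt_card h2
    omega
  intro a ha
  have e1 := key f g hf hg hmap a ha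
  have e2 := key g f hg hf hmap.symm a ha
  omega

section main
variable {n r : ℕ} {lam mu : ℤ → ℕ}

theorem JMat_eq (hn : 1 ≤ n) (hr : 1 ≤ r) (hlam : lam ∈ LambdaSet n r) (hmu : mu ∈ LambdaSet n r)
    (d : Equiv.Perm ℤ) (k l : ℤ) : JMat n r lam mu d k l =
      ((fun b => (blk n r lam b, blk n r mu (d⁻¹ b))) ⁻¹' {(k, l)}).ncard := by
  rw [JMat]
  congr 1
  ext b
  simp only [Set.mem_inter_iff, Set.mem_preimage, Set.mem_singleton_iff, Prod.mk.injEq,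
    mem_Rset_iff hn hr hlam, Set.mem_image, mem_Rset_iff hn hr hmu]
  apply and_congr_right
  intro _
  constructor
  · rintro ⟨a, ha, rfl⟩; simpa using ha
  · intro h; exact ⟨d⁻¹ b, h, by simp⟩

theorem sigma_lt (hn : 1 ≤ n) (hr : 1 ≤ r) (hlam : lam ∈ LambdaSet n r) (hmu : mu ∈ LambdaSet n r)
    {d : Equiv.Perm ℤ} (hd : d ∈ AffSym r) {i j : ℤ} (hij : i < j) :
    sigmaOrd (JMat n r lam mu d) i j = (SU d (bnd n r lam i) (bnd n r mu (j - 1))).ncard := by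
  have e : (fun b => (blk n r lam b, blk n r mu (d⁻¹ b))) ⁻¹' {p : ℤ × ℤ | p.1 ≤ i ∧ j ≤ p.2} =
      SU d (bnd n r lam i) (bnd n r mu (j - 1)) := by
    ext b
    simp only [SU, Set.mem_preimage, Set.mem_ofPred_eq, blk_le hn hr hlam, le_blk hn hr hmu]
  rw [sigmaOrd, if_pos hij, ← e, ← fiber_sum _ _ (by rw [e]; exact SU_fin hr hd _ _)]
  simp only [JMat_eq hn hr hlam hmu, Set.mem_ofPred_eq]

theorem sigma_ge (hn : 1 ≤ n) (hr : 1 ≤ r) (hlam : lam ∈ LambdaSet n r) (hmu : mu ∈ LambdaSet n r)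
    {d : Equiv.Perm ℤ} (hd : d ∈ AffSym r) {i j : ℤ} (hij : ¬ i < j) :
    sigmaOrd (JMat n r lam mu d) i j = (SL d (bnd n r lam (i - 1)) (bnd n r mu j)).ncard := by
  have e : (fun b => (blk n r lam b, blk n r mu (d⁻¹ b))) ⁻¹' {p : ℤ × ℤ | i ≤ p.1 ∧ p.2 ≤ j} =
      SL d (bnd n r lam (i - 1)) (bnd n r mu j) := by
    ext b
    simp only [SL, Set.mem_preimage, Set.mem_ofPred_eq, blk_le hn hr hmu, le_blk hn hr hlam]
  rw [sigmaOrd, if_neg hij, ← e, ← fiber_sum _ _ (by rw [e]; exact SL_fin hr hd _ _)]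
  simp only [JMat_eq hn hr hlam hmu, Set.mem_ofPred_eq]

theorem fiber_sum' {α ι : Type*} (F : α → ι) (U : Set α) (hU : U.Finite) :
    ∑ᶠ (p : ι), (U ∩ F ⁻¹' {p}).ncard = U.ncard := by
  have : Finite U := hU
  have h := fiber_sum (fun a : U => F a) Set.univ (Set.toFinite _)
  simp only [Set.mem_univ, finsum_true, Set.preimage_univ, Set.ncard_univ,
    Nat.card_coe_set_eq] at h
  rw [← h]
  apply finsum_congr
  intro p
  rw [← Set.ncard_image_of_injective _ (Subtype.val_injective (p := fun a => a ∈ U))]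
  congr 1
  ext a
  simp [and_comm]

theorem ro_eq (hn : 1 ≤ n) (hr : 1 ≤ r) (hlam : lam ∈ LambdaSet n r) (hmu : mu ∈ LambdaSet n r)
    (d : Equiv.Perm ℤ) (i : ℤ) : roM (JMat n r lam mu d) i = (Rset n r lam i).ncard := by
  have hfin : (Rset n r lam i).Finite := by rw [Rset_eq hn hlam]; exact Set.finite_Ioc _ _
  rw [← fiber_sum' (fun b => blk n r mu (d⁻¹ b)) _ hfin]
  apply finsum_congr
  intro j
  rw [JMat]
  congr 1
  ext b
  simp only [Set.mem_inter_iff, Set.mem_preimage, Set.mem_singleton_iff, Set.mem_image,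
    mem_Rset_iff hn hr hmu]
  apply and_congr_right
  intro _
  constructor
  · rintro ⟨a, ha, rfl⟩; simpa using ha
  · intro h; exact ⟨d⁻¹ b, h, by simp⟩

theorem JMat_col (hn : 1 ≤ n) (hr : 1 ≤ r) (hlam : lam ∈ LambdaSet n r)
    (d : Equiv.Perm ℤ) (k l : ℤ) : JMat n r lam mu d k l =
      (Rset n r mu l ∩ (fun a => blk n r lam (d a)) ⁻¹' {k}).ncard := by
  rw [JMat, ← Set.ncard_image_of_injective (Rset n r mu l ∩ _) d.injective]
  congr 1
  ext b
  simp only [Set.mem_inter_iff, Set.mem_preimage, Set.mem_singleton_iff, Set.mem_image,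
    mem_Rset_iff hn hr hlam]
  constructor
  · rintro ⟨h, a, ha, rfl⟩; exact ⟨a, ⟨ha, h⟩, rfl⟩
  · rintro ⟨a, ⟨ha, h⟩, rfl⟩; exact ⟨h, a, ha, rfl⟩

theorem co_eq (hn : 1 ≤ n) (hr : 1 ≤ r) (hlam : lam ∈ LambdaSet n r) (hmu : mu ∈ LambdaSet n r)
    (d : Equiv.Perm ℤ) (j : ℤ) : coM (JMat n r lam mu d) j = (Rset n r mu j).ncard := by
  have hfin : (Rset n r mu j).Finite := by rw [Rset_eq hn hmu]; exact Set.finite_Ioc _ _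
  rw [← fiber_sum' (fun a => blk n r lam (d a)) _ hfin]
  apply finsum_congr
  intro i
  exact JMat_col hn hr hlam d i j

theorem JMat_inj (hn : 1 ≤ n) (hr : 1 ≤ r) (hlam : lam ∈ LambdaSet n r) (hmu : mu ∈ LambdaSet n r)
    {y d : Equiv.Perm ℤ} (hy : y ∈ DRep2 n r lam mu) (hd : d ∈ DRep2 n r lam mu)
    (h : JMat n r lam mu y = JMat n r lam mu d) : y = d := by
  have hb : ∀ a, blk n r lam (y a) = blk n r lam (d a) := by
    intro a
    have hmem := (mem_Rset_iff hn hr hmu _ a).2 rfl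
    set l := blk n r mu a
    have my := DRep_mono hn hr hmu hy.2 l
    have md := DRep_mono hn hr hmu hd.2 l
    rw [inv_inv] at my md
    rw [Rset_eq hn hmu] at hmem
    refine mono_unique (f := fun a => blk n r lam (y a)) (g := fun a => blk n r lam (d a))
      ((blk_mono hn hr hlam).comp_monotoneOn my.monotoneOn)
      ((blk_mono hn hr hlam).comp_monotoneOn md.monotoneOn) ?_ a hmem
    intro v
    rw [← Rset_eq hn hmu, ← JMat_col hn hr hlam, ← JMat_col hn hr hlam, h]
  have hinv : ∀ b, y⁻¹ b = d⁻¹ b := by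
    intro b
    have hmem := (mem_Rset_iff hn hr hlam _ b).2 rfl
    set k := blk n r lam b
    rw [Rset_eq hn hlam] at hmem
    refine mono_unique (DRep_mono hn hr hlam hy.1 k).monotoneOn
      (DRep_mono hn hr hlam hd.1 k).monotoneOn ?_ b hmem
    intro v
    rw [← Rset_eq hn hlam]
    rw [← Set.ncard_image_of_injective _ (d.injective.comp y⁻¹.injective)]
    congr 1
    ext c
    simp only [Set.mem_image, Set.mem_inter_iff, Set.mem_preimage, Set.mem_singleton_iff,
      mem_Rset_iff hn hr hlam, Function.comp]
    constructor
    · rintro ⟨x, ⟨hx1, rfl⟩, rfl⟩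
      refine ⟨?_, by simp⟩
      rw [← hb, ← hx1]; simp
    · rintro ⟨h1, rfl⟩
      refine ⟨y (d⁻¹ c), ⟨?_, by simp⟩, by simp⟩
      rw [hb]; simpa using h1
  have : y⁻¹ = d⁻¹ := Equiv.ext hinv
  exact inv_injective this

end main

end JProof

/-- if `y, d ∈ D^Δ_{λ,μ}` with `y ≤ d` in the Bruhat order and `y ≠ d`,
then `B = J_Δ(λ,y,μ)` and `A = J_Δ(λ,d,μ)` satisfy `B ⊏ A`: `B ⊑ A` and `B ≠ A`. -/
theorem JMat_sq_lt_of_bruhat_lt (n r : ℕ) (hn : 1 ≤ n) (hr : 1 ≤ r)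
    (lam mu : ℤ → ℕ) (hlam : lam ∈ LambdaSet n r) (hmu : mu ∈ LambdaSet n r)
    (y d : Equiv.Perm ℤ) (hy : y ∈ DRep2 n r lam mu) (hd : d ∈ DRep2 n r lam mu)
    (hle : abruhatLE r y d) (hne : y ≠ d) :
    ((∀ i j : ℤ, i ≠ j →
      sigmaOrd (JMat n r lam mu y) i j ≤ sigmaOrd (JMat n r lam mu d) i j) ∧
    roM (JMat n r lam mu y) = roM (JMat n r lam mu d) ∧
    coM (JMat n r lam mu y) = coM (JMat n r lam mu d)) ∧
    JMat n r lam mu y ≠ JMat n r lam mu d := by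
  have hya : y ∈ AffSym r := hy.1.1
  have hda : d ∈ AffSym r := hd.1.1
  refine ⟨⟨?_, ?_, ?_⟩, fun h => hne (JProof.JMat_inj hn hr hlam hmu hy hd h)⟩
  · intro i j _
    by_cases hij : i < j
    · rw [JProof.sigma_lt hn hr hlam hmu hya hij, JProof.sigma_lt hn hr hlam hmu hda hij]
      exact (JProof.bruhat_counts hr hya hle _ _).1
    · rw [JProof.sigma_ge hn hr hlam hmu hya hij, JProof.sigma_ge hn hr hlam hmu hda hij]
      exact (JProof.bruhat_counts hr hya hle _ _).2
  · funext i
    rw [JProof.ro_eq hn hr hlam hmu, JProof.ro_eq hn hr hlam hmu]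
  · funext j
    rw [JProof.co_eq hn hr hlam hmu, JProof.co_eq hn hr hlam hmu]
end

section
/- Let λ, μ ∈ Λ_Δ(n,r), d ∈ D^Δ_{λ,μ}, A = (a_{i,j}) = J_Δ(λ,d,μ), and let d^+ be the unique element of maximal length in the double coset 𝔖_λ d 𝔖_μ. Then ℓ(d^+) = d_A + ℓ(w_{0,μ}), where d_A = Σ a_{i,j} a_{k,l}, the (finite) sum being over all i, j, k, l ∈ ℤ with 1 ≤ i ≤ n, k ≤ i and j < l, and w_{0,μ} is the longest element of 𝔖_μ. -/
open scoped Classical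

namespace AffAux

theorem small_k {r : ℕ} {x k : ℤ} (h1 : 1 ≤ x) (h2 : x ≤ r) (h3 : 1 ≤ x + k * r)
    (h4 : x + k * r ≤ r) : k = 0 := by
  have hr : (0:ℤ) < r := by omega
  rcases lt_trichotomy k 0 with h | h | h
  · have : k * r ≤ (-1) * r := by apply mul_le_mul_of_nonneg_right <;> omega
    omega
  · exact h
  · have : 1 * (r:ℤ) ≤ k * r := by apply mul_le_mul_of_nonneg_right <;> omega
    omega

theorem red_mem {r : ℕ} (hr : 1 ≤ r) (x : ℤ) :
    1 ≤ x + (-((x - 1) / r)) * r ∧ x + (-((x - 1) / r)) * r ≤ r := by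
  have h0 : (0:ℤ) < r := by omega
  have h1 := Int.emod_nonneg (x - 1) (ne_of_gt h0)
  have h2 := Int.emod_lt_of_pos (x - 1) h0
  have h3 := Int.emod_add_mul_ediv (x - 1) r
  constructor <;> nlinarith

theorem aff_shift {r : ℕ} {w : Equiv.Perm ℤ} (hw : w ∈ AffSym r) (a k : ℤ) :
    w (a + k * r) = w a + k * r := by
  have hw' : ∀ i : ℤ, w (i + r) = w i + r := hw
  induction k using Int.induction_on with
  | zero => simp
  | succ i ih =>
    have := hw' (a + i * r)
    rw [show a + ((i:ℤ) + 1) * r = a + i * r + r by ring, this, ih]; ring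
  | pred i ih =>
    have := hw' (a + (-(i:ℤ) - 1) * r)
    rw [show a + (-(i:ℤ) - 1) * r + r = a + -(i:ℤ) * r by ring, ih] at this
    linarith

noncomputable def cnt (r : ℕ) (S : Set (ℤ × ℤ)) : ℕ := {p | p ∈ S ∧ 1 ≤ p.1 ∧ p.1 ≤ (r:ℤ)}.ncard

def ShInv (r : ℕ) (S : Set (ℤ × ℤ)) : Prop :=
  ∀ p ∈ S, ∀ k : ℤ, (p.1 + k * r, p.2 + k * r) ∈ S

theorem cnt_eq {r : ℕ} (hr : 1 ≤ r) {S : Set (ℤ × ℤ)} (hS : ShInv r S) (f : ℤ × ℤ → ℤ)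
    (hf : ∀ (p : ℤ × ℤ) (k : ℤ), f (p.1 + k * r, p.2 + k * r) = f p + k * r) :
    cnt r S = {p | p ∈ S ∧ 1 ≤ f p ∧ f p ≤ (r:ℤ)}.ncard := by
  unfold cnt
  refine Set.ncard_congr
    (fun p _ => (p.1 + (-((f p - 1) / r)) * r, p.2 + (-((f p - 1) / r)) * r)) ?_ ?_ ?_
  · rintro p ⟨hp, h1, h2⟩
    refine ⟨hS p hp _, ?_⟩
    rw [hf]
    exact red_mem hr _
  · rintro ⟨a, b⟩ ⟨c, d⟩ ⟨hp, h1, h2⟩ ⟨hq, h3, h4⟩ h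
    simp only [Prod.mk.injEq] at h h1 h2 h3 h4
    generalize (-((f (a, b) - 1) / (r:ℤ))) = k at h
    generalize (-((f (c, d) - 1) / (r:ℤ))) = k' at h
    have e : a + (k - k') * r = c := by linarith [h.1]
    have : k - k' = 0 := small_k h1 h2 (by rw [e]; exact h3) (by rw [e]; exact h4)
    have hk : k = k' := by omega
    subst hk
    simp only [Prod.mk.injEq]
    constructor <;> linarith [h.1, h.2]
  · rintro ⟨a, b⟩ ⟨hp, h1, h2⟩
    have hm := red_mem hr a
    set k := -((a - 1) / (r:ℤ)) with hk
    refine ⟨(a + k * r, b + k * r), ⟨hS _ hp k, hm⟩, ?_⟩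
    have e := hf (a, b) k
    simp only at e
    have hm2 := red_mem hr (f (a, b) + k * r)
    simp only [e]
    set k2 := -((f (a, b) + k * r - 1) / (r:ℤ)) with hk2
    have : k + k2 = 0 := small_k h1 h2 (by linarith [hm2.1]) (by linarith [hm2.2])
    have h2 : k2 = -k := by omega
    rw [h2]
    simp only [Prod.mk.injEq]
    constructor <;> ring

theorem cnt_image {r : ℕ} (hr : 1 ≤ r) {S T : Set (ℤ × ℤ)} (hS : ShInv r S) (_hT : ShInv r T)
    (φ : ℤ × ℤ ≃ ℤ × ℤ)
    (hφ : ∀ (p : ℤ × ℤ) (k : ℤ), φ (p.1 + k * r, p.2 + k * r) = ((φ p).1 + k * r, (φ p).2 + k * r))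
    (h : ∀ p, p ∈ S ↔ φ p ∈ T) : cnt r S = cnt r T := by
  rw [cnt_eq hr hS (fun p => (φ p).1) (fun p k => by simp only [hφ])]
  unfold cnt
  rw [← Set.ncard_image_of_injective _ φ.injective]
  congr 1
  ext q
  simp only [Set.mem_image, Set.mem_ofPred_eq]
  constructor
  · rintro ⟨p, ⟨hp, h1, h2⟩, rfl⟩
    exact ⟨(h p).1 hp, h1, h2⟩
  · rintro ⟨hq, h1, h2⟩
    refine ⟨φ.symm q, ⟨(h _).2 (by simpa using hq), by simpa using h1, by simpa using h2⟩, by simp⟩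

def InvS (w : Equiv.Perm ℤ) : Set (ℤ × ℤ) := {p | p.1 < p.2 ∧ w p.2 < w p.1}

theorem invS_sh {r : ℕ} {w : Equiv.Perm ℤ} (hw : w ∈ AffSym r) : ShInv r (InvS w) := by
  rintro ⟨a, b⟩ ⟨h1, h2⟩ k
  simp only [InvS, Set.mem_ofPred_eq, aff_shift hw] at *
  constructor <;> linarith

theorem aff_bdd {r : ℕ} (hr : 1 ≤ r) {w : Equiv.Perm ℤ} (hw : w ∈ AffSym r) :
    ∃ C : ℤ, ∀ a, |w a - a| ≤ C := by
  refine ⟨∑ i ∈ Finset.Icc (1:ℤ) r, |w i - i|, fun a => ?_⟩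
  have hm := red_mem hr a
  set k := -((a - 1) / (r:ℤ)) with hk
  have e := aff_shift hw a k
  have : |w a - a| = |w (a + k * r) - (a + k * r)| := by rw [e]; congr 1; ring
  rw [this]
  exact Finset.single_le_sum (f := fun i => |w i - i|) (fun i _ => abs_nonneg _)
    (Finset.mem_Icc.2 hm)

theorem inv_fin {r : ℕ} (hr : 1 ≤ r) {w : Equiv.Perm ℤ} (hw : w ∈ AffSym r) :
    {p | p ∈ InvS w ∧ 1 ≤ p.1 ∧ p.1 ≤ (r:ℤ)}.Finite := by
  obtain ⟨C, hC⟩ := aff_bdd hr hw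
  apply Set.Finite.subset ((Set.finite_Icc (1:ℤ) r).prod (Set.finite_Icc (1:ℤ) (r + 2 * C)))
  rintro ⟨a, b⟩ ⟨⟨h1, h2⟩, h3, h4⟩
  have ha := abs_le.1 (hC a)
  have hb := abs_le.1 (hC b)
  simp only [Set.mem_prod, Set.mem_Icc] at *
  refine ⟨⟨h3, h4⟩, ?_, ?_⟩ <;> linarith [ha.2, hb.1]

noncomputable def inv (r : ℕ) (w : Equiv.Perm ℤ) : ℕ := cnt r (InvS w)

theorem inv_inv {r : ℕ} (hr : 1 ≤ r) {w : Equiv.Perm ℤ} (hw : w ∈ AffSym r) :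
    inv r w⁻¹ = inv r w := by
  have hw' := (AffSym r).inv_mem hw
  refine cnt_image hr (invS_sh hw') (invS_sh hw)
    ((Equiv.prodComm ℤ ℤ).trans (Equiv.prodCongr w⁻¹ w⁻¹)) ?_ ?_
  · rintro ⟨a, b⟩ k
    simp [-Equiv.Perm.coe_inv, aff_shift hw']
  · rintro ⟨a, b⟩
    simp [InvS, and_comm]

theorem not_dvd_one {r : ℕ} (hr : 2 ≤ r) : ¬ (r:ℤ) ∣ 1 := by
  intro h
  have := Int.le_of_dvd one_pos h
  omega

theorem t_apply {r : ℕ} (hr : 2 ≤ r) (i k : ℤ) : tPerm r i (i + 1) k = tFun r i (i + 1) k := by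
  have h : ¬ (r:ℤ) ∣ (i + 1 - i) := by simpa using not_dvd_one hr
  simp only [tPerm, dif_neg h]
  rfl

/-- case description -/
theorem t_cases {r : ℕ} (hr : 2 ≤ r) (i k : ℤ) :
    ((∃ m : ℤ, k = i + m * r) ∧ tPerm r i (i + 1) k = k + 1) ∨
    ((∃ m : ℤ, k = i + 1 + m * r) ∧ tPerm r i (i + 1) k = k - 1) ∨
    ((∀ m : ℤ, k ≠ i + m * r) ∧ (∀ m : ℤ, k ≠ i + 1 + m * r) ∧ tPerm r i (i + 1) k = k) := by
  rw [t_apply hr]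
  unfold tFun
  by_cases h1 : (r : ℤ) ∣ (k - i)
  · left
    obtain ⟨m, hm⟩ := h1
    refine ⟨⟨m, by linarith⟩, ?_⟩
    rw [if_pos ⟨m, hm⟩]; ring
  · rw [if_neg h1]
    right
    by_cases h2 : (r : ℤ) ∣ (k - (i + 1))
    · left
      obtain ⟨m, hm⟩ := h2
      refine ⟨⟨m, by linarith⟩, ?_⟩
      rw [if_pos ⟨m, hm⟩]; ring
    · right
      rw [if_neg h2]
      refine ⟨fun m hm => h1 ⟨m, by rw [hm]; ring⟩, fun m hm => h2 ⟨m, by rw [hm]; ring⟩, rfl⟩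

theorem t_left {r : ℕ} (hr : 2 ≤ r) (i : ℤ) : tPerm r i (i + 1) i = i + 1 := by
  rw [t_apply hr]; simp [tFun]

theorem t_right {r : ℕ} (hr : 2 ≤ r) (i : ℤ) : tPerm r i (i + 1) (i + 1) = i := by
  rw [t_apply hr]
  have := not_dvd_one hr
  simp [tFun, this]

theorem t_mem (r : ℕ) (i : ℤ) : tPerm r i (i + 1) ∈ AffSym r := by
  unfold tPerm
  split_ifs with h
  · exact (AffSym r).one_mem
  · intro k
    change tFun r i (i + 1) (k + r) = tFun r i (i + 1) k + r
    unfold tFun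
    have e1 : ((r:ℤ) ∣ k + r - i) ↔ (r:ℤ) ∣ k - i := by
      rw [show k + r - i = k - i + r by ring]; exact dvd_add_self_right
    have e2 : ((r:ℤ) ∣ k + r - (i + 1)) ↔ (r:ℤ) ∣ k - (i + 1) := by
      rw [show k + r - (i + 1) = k - (i + 1) + r by ring]; exact dvd_add_self_right
    simp only [e1, e2]
    split_ifs <;> ring

theorem t_sq (r : ℕ) (i : ℤ) : tPerm r i (i + 1) * tPerm r i (i + 1) = 1 := by
  unfold tPerm
  split_ifs with h
  · simp
  · ext k
    exact tFun_invol r i (i + 1) h k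

theorem t_invol (r : ℕ) (i k : ℤ) : tPerm r i (i + 1) (tPerm r i (i + 1) k) = k := by
  have := congrArg (fun f : Equiv.Perm ℤ => f k) (t_sq r i)
  simpa using this

theorem t_inv (r : ℕ) (i : ℤ) : (tPerm r i (i + 1))⁻¹ = tPerm r i (i + 1) :=
  inv_eq_of_mul_eq_one_left (t_sq r i)

theorem ii_orbit {r : ℕ} {i a b m : ℤ} (hm : a = i + m * r) (hb : b = i + 1 + m * r) :
    ∃ m : ℤ, a = i + m * r ∧ b = i + 1 + m * r := ⟨m, hm, hb⟩

theorem t_lt {r : ℕ} (hr : 2 ≤ r) (i a b : ℤ) (hab : a < b)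
    (h : ¬ ∃ m : ℤ, a = i + m * r ∧ b = i + 1 + m * r) :
    tPerm r i (i + 1) a < tPerm r i (i + 1) b := by
  have hne : tPerm r i (i + 1) a ≠ tPerm r i (i + 1) b :=
    fun e => (ne_of_lt hab) ((tPerm r i (i + 1)).injective e)
  rcases t_cases hr i a with ⟨⟨m, hm⟩, ha⟩ | ⟨⟨m, hm⟩, ha⟩ | ⟨ha1, ha2, ha⟩ <;>
  rcases t_cases hr i b with ⟨⟨m', hm'⟩, hb⟩ | ⟨⟨m', hm'⟩, hb⟩ | ⟨hb1, hb2, hb⟩ <;>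
  rw [ha, hb] at hne ⊢ <;> try omega
  -- a to a+1, b to b-1
  by_contra hcon
  have : b = a + 1 ∨ b = a + 2 := by omega
  rcases this with e | e
  · exact h ⟨m, hm, by linarith⟩
  · omega

theorem inv_mul_t {r : ℕ} (hr : 2 ≤ r) {w : Equiv.Perm ℤ} (hw : w ∈ AffSym r) (i : ℤ)
    (hi : w i < w (i + 1)) : inv r (w * tPerm r i (i + 1)) = inv r w + 1 := by
  have hr1 : 1 ≤ r := by omega
  set s := tPerm r i (i + 1) with hs
  have hsm : s ∈ AffSym r := t_mem r i
  have hws := (AffSym r).mul_mem hw hsm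
  -- the orbit
  let O : Set (ℤ × ℤ) := {p | ∃ m : ℤ, p.1 = i + m * r ∧ p.2 = i + 1 + m * r}
  have hO : O ⊆ InvS (w * s) := by
    rintro ⟨a, b⟩ ⟨m, h1, h2⟩
    simp only at h1 h2
    subst h1 h2
    simp only [InvS, Set.mem_ofPred_eq, Equiv.Perm.mul_apply, aff_shift hsm, aff_shift hw]
    rw [hs, t_left hr, t_right hr]
    constructor <;> linarith
  let S' : Set (ℤ × ℤ) := InvS (w * s) \ O
  have hS' : ShInv r S' := by
    rintro ⟨a, b⟩ ⟨h1, h2⟩ k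
    refine ⟨invS_sh hws _ h1 k, ?_⟩
    rintro ⟨m, h3, h4⟩
    refine h2 ⟨m - k, ?_, ?_⟩
    · simp only at h3 ⊢; linarith
    · simp only at h4 ⊢; linarith
  have key : cnt r S' = cnt r (InvS w) := by
    refine cnt_image hr1 hS' (invS_sh hw) (Equiv.prodCongr s s) ?_ ?_
    · rintro ⟨a, b⟩ k
      simp [aff_shift hsm]
    · rintro ⟨a, b⟩
      change ((a < b ∧ (w * s) b < (w * s) a) ∧ _) ↔ (s a < s b ∧ w (s b) < w (s a))
      simp only [Equiv.Perm.mul_apply]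
      constructor
      · rintro ⟨⟨h1, h2⟩, h3⟩
        exact ⟨t_lt hr i a b h1 h3, h2⟩
      · rintro ⟨h1, h2⟩
        have hnO : ¬ ∃ m : ℤ, s a = i + m * r ∧ s b = i + 1 + m * r := by
          rintro ⟨m, h3, h4⟩
          rw [h3, h4, aff_shift hw, aff_shift hw] at h2
          linarith
        have h5 := t_lt hr i _ _ h1 hnO
        rw [hs, t_invol, t_invol] at h5
        refine ⟨⟨h5, h2⟩, ?_⟩
        rintro ⟨m, h3, h4⟩
        simp only at h3 h4
        rw [h3, h4, aff_shift hsm, aff_shift hsm, hs, t_left hr, t_right hr] at h1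
        linarith
  have one : {p | p ∈ O ∧ 1 ≤ p.1 ∧ p.1 ≤ (r:ℤ)} =
      {(i + (-((i - 1) / r)) * r, i + 1 + (-((i - 1) / r)) * r)} := by
    have hm := red_mem hr1 i
    ext ⟨a, b⟩
    simp only [Set.mem_ofPred_eq, Set.mem_singleton_iff, Prod.mk.injEq]
    set k := -((i - 1) / (r:ℤ))
    constructor
    · rintro ⟨⟨m, h1, h2⟩, h3, h4⟩
      simp only at h1 h2
      have : m - k = 0 := small_k hm.1 hm.2 (by linarith) (by linarith)
      have : m = k := by omega
      subst this
      exact ⟨h1, h2⟩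
    · rintro ⟨rfl, rfl⟩
      exact ⟨⟨k, rfl, rfl⟩, hm⟩
  have split : {p | p ∈ InvS (w * s) ∧ 1 ≤ p.1 ∧ p.1 ≤ (r:ℤ)} =
      {p | p ∈ S' ∧ 1 ≤ p.1 ∧ p.1 ≤ (r:ℤ)} ∪ {p | p ∈ O ∧ 1 ≤ p.1 ∧ p.1 ≤ (r:ℤ)} := by
    ext p
    have := @hO p
    simp only [S', Set.mem_union, Set.mem_ofPred_eq, Set.mem_sdiff]
    tauto
  have fin := inv_fin hr1 hws
  have : inv r (w * s) = cnt r S' + 1 := by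
    unfold inv cnt
    rw [split, Set.ncard_union_eq ?_ ?_ ?_, one, Set.ncard_singleton]
    · rw [Set.disjoint_left]
      rintro p ⟨⟨_, h1⟩, _⟩ ⟨h2, _⟩
      exact h1 h2
    · exact fin.subset (by rw [split]; exact Set.subset_union_left)
    · rw [one]; exact Set.finite_singleton _
  rw [this, key]
  rfl

theorem inv_mul_t_desc {r : ℕ} (hr : 2 ≤ r) {w : Equiv.Perm ℤ} (hw : w ∈ AffSym r) (i : ℤ)
    (hi : w (i + 1) < w i) : inv r w = inv r (w * tPerm r i (i + 1)) + 1 := by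
  have hws := (AffSym r).mul_mem hw (t_mem r i)
  have := inv_mul_t hr hws i (by simpa [t_left hr, t_right hr] using hi)
  rwa [mul_assoc, t_sq, mul_one] at this

theorem inv_mul_t_le {r : ℕ} (hr : 2 ≤ r) {w : Equiv.Perm ℤ} (hw : w ∈ AffSym r) (i : ℤ) :
    inv r (w * tPerm r i (i + 1)) ≤ inv r w + 1 := by
  have : w i ≠ w (i + 1) := fun e => by have := w.injective e; omega
  rcases lt_or_gt_of_ne this with h | h
  · exact (inv_mul_t hr hw i h).le
  · have := inv_mul_t_desc hr hw i h
    omega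

theorem rho_apply (k a : ℤ) : (rhoP ^ k) a = a + k := by
  unfold rhoP
  simp

theorem rho_mem (r : ℕ) (k : ℤ) : rhoP ^ k ∈ AffSym r := by
  intro i
  rw [rho_apply, rho_apply]; ring

theorem inv_rho_mul (r : ℕ) (k : ℤ) (w : Equiv.Perm ℤ) : inv r (rhoP ^ k * w) = inv r w := by
  unfold inv
  congr 1
  ext p
  simp [InvS, Equiv.Perm.mul_apply, rho_apply]

theorem strictMono_eq {w : Equiv.Perm ℤ} (h : StrictMono w) : w = rhoP ^ (w 0) := by
  have h1 : ∀ a, w (a + 1) = w a + 1 := by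
    intro a
    have h2 := h (lt_add_one a)
    obtain ⟨b, hb⟩ := w.surjective (w a + 1)
    have h3 : a < b := h.lt_iff_lt.1 (by omega)
    have h4 := h.monotone (show a + 1 ≤ b by omega)
    omega
  ext a
  rw [rho_apply]
  induction a using Int.induction_on with
  | zero => simp
  | succ i ih => rw [h1, ih]; ring
  | pred i ih =>
    have := h1 (-(i:ℤ) - 1)
    rw [show -(i:ℤ) - 1 + 1 = -i by ring, ih] at this
    linarith

theorem strictMono_or {r : ℕ} (hr : 1 ≤ r) {w : Equiv.Perm ℤ} (hw : w ∈ AffSym r) :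
    StrictMono w ∨ ∃ i : ℤ, 1 ≤ i ∧ i ≤ r ∧ w (i + 1) < w i := by
  by_cases h : ∃ i : ℤ, 1 ≤ i ∧ i ≤ r ∧ w (i + 1) < w i
  · exact Or.inr h
  · left
    push Not at h
    apply strictMono_int_of_lt_succ
    intro a
    have hm := red_mem hr a
    have h1 := h _ hm.1 hm.2
    set k := -((a - 1) / (r:ℤ))
    rw [show a + k * r + 1 = (a + 1) + k * r by ring, aff_shift hw, aff_shift hw] at h1
    have : w a ≠ w (a + 1) := fun e => by have := w.injective e; omega
    omega

theorem inv_strictMono (r : ℕ) {w : Equiv.Perm ℤ} (h : StrictMono w) : inv r w = 0 := by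
  have : {p | p ∈ InvS w ∧ 1 ≤ p.1 ∧ p.1 ≤ (r:ℤ)} = ∅ := by
    ext ⟨a, b⟩
    simp only [InvS, Set.mem_ofPred_eq, Set.mem_empty_iff_false, iff_false]
    rintro ⟨⟨h1, h2⟩, _⟩
    exact absurd (h h1) (by omega)
  unfold inv cnt
  rw [this, Set.ncard_empty]

theorem exists_word {r : ℕ} (hr : 1 ≤ r) (N : ℕ) : ∀ w ∈ AffSym r, inv r w = N →
    ∃ (k : ℤ) (l : List (Equiv.Perm ℤ)), l.length = N ∧ (∀ s ∈ l, s ∈ sGen r) ∧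
      w = rhoP ^ k * l.prod := by
  induction N with
  | zero =>
    intro w hw h0
    rcases strictMono_or hr hw with h | ⟨i, h1, h2, h3⟩
    · exact ⟨w 0, [], rfl, by simp, by simpa using strictMono_eq h⟩
    · by_cases hr2 : 2 ≤ r
      · have := inv_mul_t_desc hr2 hw i h3
        omega
      · have : r = 1 := by omega
        subst this
        have := hw i
        simp only [Nat.cast_one] at this
        omega
  | succ N ih =>
    intro w hw h0
    rcases strictMono_or hr hw with h | ⟨i, h1, h2, h3⟩
    · have := inv_strictMono r h
      omega
    · by_cases hr2 : 2 ≤ r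
      · have := inv_mul_t_desc hr2 hw i h3
        obtain ⟨k, l, hl, hg, e⟩ := ih (w * tPerm r i (i + 1))
          ((AffSym r).mul_mem hw (t_mem r i)) (by omega)
        refine ⟨k, l ++ [tPerm r i (i + 1)], by simp [hl], ?_, ?_⟩
        · intro s hs
          rcases List.mem_append.1 hs with h | h
          · exact hg s h
          · rw [List.mem_singleton.1 h]
            exact ⟨i, h1, h2, rfl⟩
        · rw [List.prod_append, List.prod_singleton, ← mul_assoc, ← e, mul_assoc, t_sq, mul_one]
      · have : r = 1 := by omega
        subst this
        have := hw i
        simp only [Nat.cast_one] at this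
        omega

theorem sum_window {r : ℕ} (f : ℤ → ℤ) (hf : ∀ a, f (a + r) = f a) (hr : 1 ≤ r) (i : ℤ) :
    ∑ j ∈ Finset.Ico i (i + r), f j = ∑ j ∈ Finset.Ico 0 (0 + (r:ℤ)), f j := by
  have step : ∀ i : ℤ, ∑ j ∈ Finset.Ico (i + 1) (i + 1 + r), f j =
      ∑ j ∈ Finset.Ico i (i + r), f j := by
    intro i
    have e1 : Finset.Ico i (i + r) = insert i (Finset.Ico (i + 1) (i + r)) := by
      ext x; simp only [Finset.mem_Ico, Finset.mem_insert]; omega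
    have e2 : Finset.Ico (i + 1) (i + 1 + r) = insert (i + r) (Finset.Ico (i + 1) (i + r)) := by
      ext x; simp only [Finset.mem_Ico, Finset.mem_insert]; omega
    rw [e1, e2, Finset.sum_insert (by simp), Finset.sum_insert (by simp), hf]
  induction i using Int.induction_on with
  | zero => rfl
  | succ i ih => rw [step, ih]
  | pred i ih =>
    rw [← ih, ← step]
    rw [show -(i:ℤ) - 1 + 1 = -i by ring]

noncomputable def psum (r : ℕ) (w : Equiv.Perm ℤ) : ℤ := ∑ i ∈ Finset.Icc (1 : ℤ) (r : ℤ), (w i - i)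

theorem psum_window {r : ℕ} (hr : 1 ≤ r) {w : Equiv.Perm ℤ} (hw : w ∈ AffSym r) (i : ℤ) :
    psum r w = ∑ j ∈ Finset.Ico i (i + r), (w j - j) := by
  have hf : ∀ a, (fun j => w j - j) (a + r) = (fun j => w j - j) a := by
    intro a
    have : w (a + r) = w a + r := hw a
    simp only [this]; ring
  have e : Finset.Icc (1:ℤ) r = Finset.Ico 1 (1 + (r:ℤ)) := by
    ext x; simp only [Finset.mem_Ico, Finset.mem_Icc]; omega
  unfold psum
  rw [e, sum_window _ hf hr 1, sum_window _ hf hr i]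

theorem t_one (i : ℤ) : tPerm 1 i (i + 1) = 1 := by
  unfold tPerm
  rw [dif_pos (by simp)]

theorem psum_mul_t {r : ℕ} (hr : 1 ≤ r) {w : Equiv.Perm ℤ} (hw : w ∈ AffSym r) (i : ℤ) :
    psum r (w * tPerm r i (i + 1)) = psum r w := by
  by_cases hr2 : 2 ≤ r
  · rw [psum_window hr hw i, psum_window hr ((AffSym r).mul_mem hw (t_mem r i)) i]
    have e1 : Finset.Ico i (i + r) = insert i (insert (i + 1) (Finset.Ico (i + 2) (i + r))) := by
      ext x; simp only [Finset.mem_Ico, Finset.mem_insert]; omega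
    rw [e1, Finset.sum_insert (by simp), Finset.sum_insert (by simp), Finset.sum_insert (by simp),
      Finset.sum_insert (by simp)]
    have : ∑ x ∈ Finset.Ico (i + 2) (i + (r:ℤ)), ((w * tPerm r i (i + 1)) x - x) =
        ∑ x ∈ Finset.Ico (i + 2) (i + (r:ℤ)), (w x - x) := by
      apply Finset.sum_congr rfl
      intro x hx
      rw [Finset.mem_Ico] at hx
      rw [Equiv.Perm.mul_apply]
      rcases t_cases hr2 i x with ⟨⟨m, hm⟩, _⟩ | ⟨⟨m, hm⟩, _⟩ | ⟨_, _, h⟩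
      · exfalso
        have : m = 0 := small_k (r := r) (x := 1) (by omega) (by omega) (by omega) (by omega)
        subst this
        omega
      · exfalso
        have : m = 0 := small_k (r := r) (x := 1) (by omega) (by omega) (by omega) (by omega)
        subst this
        omega
      · rw [h]
    rw [this]
    simp only [Equiv.Perm.mul_apply, t_left hr2, t_right hr2]
    ring
  · have : r = 1 := by omega
    subst this
    rw [t_one, mul_one]

theorem word_facts {r : ℕ} (hr : 1 ≤ r) (k : ℤ) (l : List (Equiv.Perm ℤ))
    (hl : ∀ s ∈ l, s ∈ sGen r) :
    l.prod ∈ AffSym r ∧ inv r l.prod ≤ l.length ∧ psum r (rhoP ^ k * l.prod) = k * r := by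
  induction l using List.reverseRecOn with
  | nil =>
    refine ⟨(AffSym r).one_mem, ?_, ?_⟩
    · rw [List.prod_nil, inv_strictMono r (by intro a b h; simpa using h)]; simp
    · simp [psum, rho_apply, mul_comm]
  | append_singleton l s ih =>
    obtain ⟨h1, h2, h3⟩ := ih (fun s hs => hl s (by simp [hs]))
    obtain ⟨i, hi1, hi2, rfl⟩ := hl s (by simp)
    rw [List.prod_append, List.prod_singleton]
    refine ⟨(AffSym r).mul_mem h1 (t_mem r i), ?_, ?_⟩
    · rw [List.length_append, List.length_singleton]
      by_cases hr2 : 2 ≤ r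
      · have := inv_mul_t_le hr2 h1 i
        omega
      · have : r = 1 := by omega
        subst this
        rw [t_one, mul_one]; omega
    · rw [← mul_assoc, psum_mul_t hr ((AffSym r).mul_mem (rho_mem r k) h1), h3]

theorem alen_eq {r : ℕ} (hr : 1 ≤ r) {w : Equiv.Perm ℤ} (hw : w ∈ AffSym r) :
    alen r w = inv r w := by
  obtain ⟨k, l, h1, h2, h3⟩ := exists_word hr _ w hw rfl
  have hk : shiftIdx r w = k := by
    have := (word_facts hr k l h2).2.2
    rw [← h3] at this
    unfold psum at this
    unfold shiftIdx
    rw [this]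
    exact Int.mul_ediv_cancel _ (by omega)
  unfold alen
  rw [hk]
  have e : (rhoP ^ k)⁻¹ * w = l.prod := by rw [h3]; group
  rw [e]
  have hi : inv r l.prod = inv r w := by rw [h3, inv_rho_mul]
  apply le_antisymm
  · exact Nat.sInf_le ⟨l, h1, h2, rfl⟩
  · unfold lenW
    refine le_csInf ?_ ?_
    · exact ⟨inv r w, l, h1, h2, rfl⟩
    rintro m ⟨l', hl1, hl2, hl3⟩
    have := (word_facts hr 0 l' hl2).2.1
    rw [hl3, hi] at this
    omega

theorem bnd_lower {n r : ℕ} (hn : 1 ≤ n) {lam : ℤ → ℕ} (hlam : lam ∈ LambdaSet n r) (m : ℤ) :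
    bnd n r lam (m - 1) =
      ((m - 1) / n) * r + ∑ t ∈ Finset.Icc (1 : ℤ) ((m - 1) % n), (lam t : ℤ) := by
  have hn0 : (0:ℤ) < n := by omega
  have h1 := Int.emod_nonneg (m - 1) (ne_of_gt hn0)
  have h2 := Int.emod_lt_of_pos (m - 1) hn0
  have h3 := Int.emod_add_mul_ediv (m - 1) n
  set q := (m - 1) / (n:ℤ)
  set t := (m - 1) % (n:ℤ)
  unfold bnd
  by_cases ht : t = 0
  · have hq : (m - 1 - 1) / (n:ℤ) = q - 1 ∧ (m - 1 - 1) % (n:ℤ) = n - 1 := by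
      rw [Int.ediv_emod_unique hn0]
      refine ⟨?_, by omega, by omega⟩
      rw [← h3, ht]; ring
    rw [hq.1, hq.2, ht]
    have h4 : ((∑ i ∈ Finset.Icc (1 : ℤ) (n : ℤ), lam i : ℕ) : ℤ) = r := by rw [hlam.2]
    push_cast at h4
    rw [show (n:ℤ) - 1 + 1 = n by ring, h4]
    simp
    ring
  · have hq : (m - 1 - 1) / (n:ℤ) = q ∧ (m - 1 - 1) % (n:ℤ) = t - 1 := by
      rw [Int.ediv_emod_unique hn0]
      refine ⟨?_, by omega, by omega⟩
      linarith
    rw [hq.1, hq.2, show t - 1 + 1 = t by ring]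

theorem bnd_mono {n r : ℕ} (hn : 1 ≤ n) {lam : ℤ → ℕ} (hlam : lam ∈ LambdaSet n r) :
    Monotone (bnd n r lam) := by
  apply monotone_int_of_le_succ
  intro a
  have := bnd_lower hn hlam (a + 1)
  rw [show a + 1 - 1 = a by ring] at this
  rw [this]
  unfold bnd
  rw [show a + 1 - 1 = a by ring]
  have : ∑ t ∈ Finset.Icc (1 : ℤ) (a % n), (lam t : ℤ) ≤
      ∑ t ∈ Finset.Icc (1 : ℤ) (a % n + 1), (lam t : ℤ) := by
    apply Finset.sum_le_sum_of_subset_of_nonneg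
    · apply Finset.Icc_subset_Icc_right; omega
    · intros; positivity
  linarith

theorem bnd_shift {n r : ℕ} (hn : 1 ≤ n) (lam : ℤ → ℕ) (m k : ℤ) :
    bnd n r lam (m + k * n) = bnd n r lam m + k * r := by
  have hn0 : (n:ℤ) ≠ 0 := by omega
  unfold bnd
  rw [show m + k * n - 1 = m - 1 + k * n by ring, Int.add_mul_ediv_right _ _ hn0,
    Int.add_mul_emod_self_right]
  ring

theorem bnd_zero {n r : ℕ} (hn : 1 ≤ n) {lam : ℤ → ℕ} (hlam : lam ∈ LambdaSet n r) :
    bnd n r lam 0 = 0 := by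
  have := bnd_lower hn hlam 1
  simpa using this

structure IsBlock (n r : ℕ) (lam : ℤ → ℕ) (β : ℤ → ℤ) : Prop where
  mem : ∀ a m, a ∈ Rset n r lam m ↔ β a = m
  mono : Monotone β
  shift : ∀ a k : ℤ, β (a + k * r) = β a + k * n
  rng : ∀ a, (1 ≤ β a ∧ β a ≤ n) ↔ (1 ≤ a ∧ a ≤ r)

theorem exists_block {n r : ℕ} (hn : 1 ≤ n) (hr : 1 ≤ r) {lam : ℤ → ℕ}
    (hlam : lam ∈ LambdaSet n r) : ∃ β, IsBlock n r lam β := by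
  have mono := bnd_mono hn hlam
  have hz := bnd_zero hn hlam
  have hk : ∀ k : ℤ, bnd n r lam (k * n) = k * r := by
    intro k
    have := bnd_shift (r := r) hn lam 0 k
    rw [zero_add, hz, zero_add] at this
    exact this
  have hr0 : (1:ℤ) ≤ r := by omega
  have ex : ∀ a : ℤ, ∃ m : ℤ, bnd n r lam (m - 1) < a ∧ a ≤ bnd n r lam m := by
    intro a
    obtain ⟨m, h1, h2⟩ := Int.exists_least_of_bdd (P := fun m => a ≤ bnd n r lam m)
      ⟨(-(|a| + 1)) * n, by
        intro z hz
        by_contra hc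
        push Not at hc
        have := mono hc.le
        rw [hk] at this
        have h5 := neg_abs_le a
        have h6 := abs_nonneg a
        nlinarith⟩
      ⟨|a| * n, by
        rw [hk]
        have h5 := le_abs_self a
        have h6 := abs_nonneg a
        nlinarith⟩
    refine ⟨m, ?_, h1⟩
    by_contra hc
    push Not at hc
    have := h2 _ hc
    omega
  choose β h1 h2 using ex
  have uniq : ∀ a m, bnd n r lam (m - 1) < a → a ≤ bnd n r lam m → β a = m := by
    intro a m h3 h4
    rcases lt_trichotomy (β a) m with h | h | h
    · have := mono (show β a ≤ m - 1 by omega)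
      have := h2 a
      omega
    · exact h
    · have := mono (show m ≤ β a - 1 by omega)
      have := h1 a
      omega
  have hmem : ∀ a m, a ∈ Rset n r lam m ↔ bnd n r lam (m - 1) < a ∧ a ≤ bnd n r lam m := by
    intro a m
    rw [bnd_lower hn hlam]
    rfl
  refine ⟨β, ?_, ?_, ?_, ?_⟩
  · intro a m
    rw [hmem]
    constructor
    · rintro ⟨h3, h4⟩
      exact uniq a m h3 h4
    · rintro rfl
      exact ⟨h1 a, h2 a⟩
  · intro a b hab
    by_contra hc
    push Not at hc
    have := mono (show β b ≤ β a - 1 by omega)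
    have := h1 a
    have := h2 b
    omega
  · intro a k
    apply uniq
    · rw [show β a + k * n - 1 = β a - 1 + k * n by ring, bnd_shift hn]
      linarith [h1 a]
    · rw [bnd_shift hn]
      linarith [h2 a]
  · intro a
    have hN : bnd n r lam n = r := by simpa using hk 1
    have e1 : 1 ≤ β a ↔ 1 ≤ a := by
      constructor
      · intro h
        have := mono (show 0 ≤ β a - 1 by omega)
        have := h1 a
        omega
      · intro h
        by_contra hc
        have := mono (show β a ≤ 0 by omega)
        have := h2 a
        omega
    have e2 : β a ≤ n ↔ a ≤ r := by
      constructor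
      · intro h
        have := mono h
        have := h2 a
        omega
      · intro h
        by_contra hc
        have := mono (show (n:ℤ) ≤ β a - 1 by omega)
        have := h1 a
        omega
    rw [e1, e2]

theorem symFin_le (r : ℕ) : SymFin r ≤ AffSym r := by
  unfold SymFin
  rw [Subgroup.closure_le]
  rintro w ⟨i, _, _, rfl⟩
  exact t_mem r i

theorem young_aff {n r : ℕ} {lam : ℤ → ℕ} {w : Equiv.Perm ℤ} (hw : w ∈ YoungSet n r lam) :
    w ∈ AffSym r := symFin_le r hw.1

theorem young_block {n r : ℕ} (hr : 1 ≤ r) {lam : ℤ → ℕ} {β : ℤ → ℤ} (hβ : IsBlock n r lam β)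
    {w : Equiv.Perm ℤ} (hw : w ∈ YoungSet n r lam) (a : ℤ) : β (w a) = β a := by
  have key : ∀ a : ℤ, 1 ≤ a → a ≤ r → β (w a) = β a := by
    intro a h1 h2
    have h3 := (hβ.rng a).2 ⟨h1, h2⟩
    have h4 := hw.2 _ h3.1 h3.2
    have h5 : w a ∈ w '' Rset n r lam (β a) := ⟨a, (hβ.mem _ _).2 rfl, rfl⟩
    rw [h4] at h5
    exact (hβ.mem _ _).1 h5
  have hm := red_mem hr a
  have := key _ hm.1 hm.2
  rw [aff_shift (young_aff hw), hβ.shift, hβ.shift] at this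
  linarith

theorem young_mul {n r : ℕ} {lam : ℤ → ℕ} {u v : Equiv.Perm ℤ} (hu : u ∈ YoungSet n r lam)
    (hv : v ∈ YoungSet n r lam) : u * v ∈ YoungSet n r lam := by
  refine ⟨(SymFin r).mul_mem hu.1 hv.1, ?_⟩
  intro i h1 h2
  rw [Equiv.Perm.coe_mul, Set.image_comp, hv.2 i h1 h2, hu.2 i h1 h2]

theorem young_t {n r : ℕ} (hr : 2 ≤ r) {lam : ℤ → ℕ} {β : ℤ → ℤ} (hβ : IsBlock n r lam β)
    (i : ℤ) (h1 : 1 ≤ i) (h2 : i < r) (h3 : β i = β (i + 1)) :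
    tPerm r i (i + 1) ∈ YoungSet n r lam := by
  refine ⟨Subgroup.subset_closure ⟨i, h1, h2, rfl⟩, ?_⟩
  have key : ∀ k, β (tPerm r i (i + 1) k) = β k := by
    intro k
    rcases t_cases hr i k with ⟨⟨m, hm⟩, h⟩ | ⟨⟨m, hm⟩, h⟩ | ⟨_, _, h⟩
    · rw [h, hm, show i + m * r + 1 = i + 1 + m * r by ring, hβ.shift, hβ.shift, h3]
    · rw [h, hm, show i + 1 + m * r - 1 = i + m * r by ring, hβ.shift, hβ.shift, h3]
    · rw [h]
  intro j _ _
  ext x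
  rw [Set.mem_image]
  constructor
  · rintro ⟨y, hy, rfl⟩
    rw [hβ.mem] at hy ⊢
    rw [key, hy]
  · intro hx
    refine ⟨tPerm r i (i + 1) x, ?_, t_invol r i x⟩
    rw [hβ.mem] at hx ⊢
    rw [key, hx]

theorem max_desc {n r : ℕ} (hn : 1 ≤ n) (hr : 1 ≤ r) {lam : ℤ → ℕ} {β : ℤ → ℤ}
    (hβ : IsBlock n r lam β) {w : Equiv.Perm ℤ} (hw : w ∈ AffSym r)
    (hmax : ∀ s ∈ YoungSet n r lam, inv r (w * s) ≤ inv r w) :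
    ∀ a b, a < b → β a = β b → w b < w a := by
  have key : ∀ a : ℤ, 1 ≤ a → a ≤ r → β a = β (a + 1) → w (a + 1) < w a := by
    intro a h1 h2 h3
    have har : a ≠ r := by
      intro e
      have h4 := (hβ.rng a).2 ⟨h1, h2⟩
      have h5 := (hβ.rng (a + 1)).1 ⟨by omega, by omega⟩
      omega
    have hr2 : 2 ≤ r := by omega
    have h4 := hmax _ (young_t hr2 hβ a h1 (by omega) h3)
    by_contra hc
    have : w a ≠ w (a + 1) := fun e => by have := w.injective e; omega
    have := inv_mul_t hr2 hw a (by omega)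
    omega
  have key2 : ∀ a, β a = β (a + 1) → w (a + 1) < w a := by
    intro a h
    have hm := red_mem hr a
    set k := -((a - 1) / (r:ℤ))
    have := key _ hm.1 hm.2 (by
      rw [show a + k * r + 1 = a + 1 + k * r by ring, hβ.shift, hβ.shift, h])
    rw [show a + k * r + 1 = a + 1 + k * r by ring, aff_shift hw, aff_shift hw] at this
    linarith
  intro a b hab
  have hab' : a + 1 ≤ b := hab
  induction b, hab' using Int.leInduction with
  | base => exact key2 a
  | succ b hb ih =>
    intro h
    have m1 := hβ.mono (show a ≤ b by omega)
    have m2 := hβ.mono (show b ≤ b + 1 by omega)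
    have := ih (by omega) (by omega)
    have := key2 b (by omega)
    omega

theorem ncard_fiber {α γ : Type*} (g : α → γ) (P : γ → Prop) (hfin : {a | P (g a)}.Finite) :
    ({a | P (g a)}).ncard = ∑ᶠ (q : γ) (_ : P q), {a | g a = q}.ncard := by
  have e : ∀ q : γ, (∑ᶠ (_ : P q), {a | g a = q}.ncard) =
      if P q then {a | g a = q}.ncard else 0 := by
    intro q
    rw [finsum_eq_if]
  simp_rw [e]
  rw [finsum_eq_sum_of_support_subset (s := hfin.toFinset.image g)]
  · rw [Set.ncard_eq_toFinset_card _ hfin,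
      Finset.card_eq_sum_card_fiberwise (f := g) (t := hfin.toFinset.image g)]
    · apply Finset.sum_congr rfl
      intro q hq
      obtain ⟨a, ha, rfl⟩ := Finset.mem_image.1 hq
      have hP : P (g a) := by simpa using ha
      rw [if_pos hP, ← Set.ncard_coe_finset]
      congr 1
      ext x
      simp only [Finset.coe_filter, Set.Finite.mem_toFinset, Set.mem_ofPred_eq]
      constructor
      · exact fun h => h.2
      · exact fun h => ⟨by rw [h]; exact hP, h⟩
    · intro x hx
      exact Finset.mem_coe.2 (Finset.mem_image_of_mem g hx)
  · intro q hq
    simp only [Function.mem_support] at hq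
    by_cases hP : P q
    · rw [if_pos hP] at hq
      obtain ⟨a, ha⟩ := Set.nonempty_of_ncard_ne_zero hq
      have ha : g a = q := ha
      rw [Finset.mem_coe, Finset.mem_image]
      exact ⟨a, by simpa [ha] using hP, ha⟩
    · rw [if_neg hP] at hq
      exact absurd rfl hq

theorem JMat_eq {n r : ℕ} (hr : 1 ≤ r) {lam mu : ℤ → ℕ} {βl βm : ℤ → ℤ}
    (hl : IsBlock n r lam βl) (hm : IsBlock n r mu βm) (d u v : Equiv.Perm ℤ)
    (hu : u ∈ YoungSet n r lam) (hv : v ∈ YoungSet n r mu) (k l : ℤ) :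
    JMat n r lam mu d k l = {a | (βl ((u * d * v) a), βm a) = (k, l)}.ncard := by
  unfold JMat
  rw [← Set.ncard_image_of_injective {a | (βl ((u * d * v) a), βm a) = (k, l)} (d * v).injective]
  congr 1
  ext x
  simp only [Set.mem_inter_iff, Set.mem_image, Set.mem_ofPred_eq, Prod.mk.injEq,
    Equiv.Perm.mul_apply, young_block hr hl hu, hl.mem, hm.mem]
  constructor
  · rintro ⟨h1, y, h2, rfl⟩
    refine ⟨v⁻¹ y, ⟨by simpa using h1, ?_⟩, by simp⟩
    rw [← young_block hr hm hv]
    simpa using h2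
  · rintro ⟨a, ⟨h1, h2⟩, rfl⟩
    exact ⟨h1, v a, by rw [young_block hr hm hv, h2], rfl⟩

end AffAux

/-- for `d ∈ D^Δ_{λ,μ}`, `A = J_Δ(λ,d,μ)`, `d⁺` the unique longest
element of `𝔖_λ d 𝔖_μ`, and `w_{0,μ}` the longest element of `𝔖_μ`,
one has `ℓ(d⁺) = d_A + ℓ(w_{0,μ})`. -/
theorem length_longest_double_coset_element (n r : ℕ) (hn : 1 ≤ n) (hr : 1 ≤ r)
    (lam mu : ℤ → ℕ) (hlam : lam ∈ LambdaSet n r) (hmu : mu ∈ LambdaSet n r)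
    (d : Equiv.Perm ℤ) (hd : d ∈ DRep2 n r lam mu)
    (dplus : Equiv.Perm ℤ) (hdp : dplus ∈ DCoset n r lam mu d)
    (hdmax : ∀ w ∈ DCoset n r lam mu d, w ≠ dplus → alen r w < alen r dplus)
    (w0 : Equiv.Perm ℤ) (hw0 : w0 ∈ YoungSet n r mu)
    (hw0max : ∀ w ∈ YoungSet n r mu, w ≠ w0 → alen r w < alen r w0) :
    alen r dplus = dWt n (JMat n r lam mu d) + alen r w0 := by
  obtain ⟨βl, hl⟩ := AffAux.exists_block hn hr hlam
  obtain ⟨βm, hm⟩ := AffAux.exists_block hn hr hmu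
  have hda : d ∈ AffSym r := hd.1.1
  obtain ⟨u, hu, v, hv, hw⟩ := hdp
  have hpa : dplus ∈ AffSym r := by
    rw [hw]
    exact (AffSym r).mul_mem ((AffSym r).mul_mem (AffAux.young_aff hu) hda) (AffAux.young_aff hv)
  have hw0a := AffAux.young_aff hw0
  have pa' := (AffSym r).inv_mem hpa
  have hle : ∀ w ∈ DCoset n r lam mu d, alen r w ≤ alen r dplus := by
    intro w hw
    by_cases e : w = dplus
    · rw [e]
    · exact (hdmax w hw e).le
  have desc1 : ∀ a b, a < b → βm a = βm b → dplus b < dplus a := by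
    apply AffAux.max_desc hn hr hm hpa
    intro s hs
    have := hle (dplus * s) ⟨u, hu, v * s, AffAux.young_mul hv hs, by rw [hw]; group⟩
    rwa [AffAux.alen_eq hr hpa,
      AffAux.alen_eq hr ((AffSym r).mul_mem hpa (AffAux.young_aff hs))] at this
  have yinv : ∀ s ∈ YoungSet n r lam, s⁻¹ ∈ YoungSet n r lam := by
    intro s hs
    refine ⟨(SymFin r).inv_mem hs.1, fun i h1 h2 => ?_⟩
    conv_lhs => rw [← hs.2 i h1 h2]
    rw [← Set.image_comp, ← Equiv.Perm.coe_mul]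
    simp
  have desc2 : ∀ a b, a < b → βl a = βl b → dplus⁻¹ b < dplus⁻¹ a := by
    apply AffAux.max_desc hn hr hl pa'
    intro s hs
    have hs' := yinv s hs
    have hsp := (AffSym r).mul_mem (AffAux.young_aff hs') hpa
    have := hle (s⁻¹ * dplus) ⟨s⁻¹ * u, AffAux.young_mul hs' hu, v, hv, by rw [hw]; group⟩
    rw [AffAux.alen_eq hr hpa, AffAux.alen_eq hr hsp, ← AffAux.inv_inv hr hpa,
      ← AffAux.inv_inv hr hsp] at this
    simpa using this
  have desc0 : ∀ a b, a < b → βm a = βm b → w0 b < w0 a := by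
    apply AffAux.max_desc hn hr hm hw0a
    intro s hs
    rw [← AffAux.alen_eq hr hw0a,
      ← AffAux.alen_eq hr ((AffSym r).mul_mem hw0a (AffAux.young_aff hs))]
    by_cases e : w0 * s = w0
    · rw [e]
    · exact (hw0max _ (AffAux.young_mul hw0 hs) e).le
  -- the inversion sets
  have I0 : AffAux.InvS w0 = {p | p.1 < p.2 ∧ βm p.1 = βm p.2} := by
    ext ⟨a, b⟩
    simp only [AffAux.InvS, Set.mem_ofPred_eq]
    constructor
    · rintro ⟨h1, h2⟩
      refine ⟨h1, le_antisymm (hm.mono h1.le) ?_⟩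
      have := hm.mono h2.le
      rwa [AffAux.young_block hr hm hw0, AffAux.young_block hr hm hw0] at this
    · rintro ⟨h1, h2⟩
      exact ⟨h1, desc0 a b h1 h2⟩
  let T : Set (ℤ × ℤ) := {p | βm p.1 < βm p.2 ∧ βl (dplus p.2) ≤ βl (dplus p.1)}
  have hT : AffAux.ShInv r T := by
    rintro ⟨a, b⟩ ⟨h1, h2⟩ k
    simp only [T, Set.mem_ofPred_eq, AffAux.aff_shift hpa, hm.shift, hl.shift] at *
    constructor <;> linarith
  have I1 : AffAux.InvS dplus = T ∪ AffAux.InvS w0 := by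
    rw [I0]
    ext ⟨a, b⟩
    simp only [AffAux.InvS, T, Set.mem_union, Set.mem_ofPred_eq]
    constructor
    · rintro ⟨h1, h2⟩
      rcases (hm.mono h1.le).lt_or_eq with h | h
      · exact Or.inl ⟨h, hl.mono h2.le⟩
      · exact Or.inr ⟨h1, h⟩
    · rintro (⟨h1, h2⟩ | ⟨h1, h2⟩)
      · have hab : a < b := by
          by_contra hc
          have := hm.mono (show b ≤ a by omega)
          omega
        refine ⟨hab, ?_⟩
        by_contra hc
        have hne : dplus a ≠ dplus b := fun e => by have := dplus.injective e; omega
        have hlt : dplus a < dplus b := by omega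
        have := desc2 _ _ hlt (le_antisymm (hl.mono hlt.le) h2)
        simp at this
        omega
      · exact ⟨h1, desc1 a b h1 h2⟩
  have split : {p | p ∈ AffAux.InvS dplus ∧ 1 ≤ p.1 ∧ p.1 ≤ (r:ℤ)} =
      {p | p ∈ T ∧ 1 ≤ p.1 ∧ p.1 ≤ (r:ℤ)} ∪
      {p | p ∈ AffAux.InvS w0 ∧ 1 ≤ p.1 ∧ p.1 ≤ (r:ℤ)} := by
    rw [I1]
    ext p
    simp only [Set.mem_union, Set.mem_ofPred_eq]
    tauto
  have fin := AffAux.inv_fin hr hpa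
  have tot : AffAux.inv r dplus = AffAux.cnt r T + AffAux.inv r w0 := by
    unfold AffAux.inv AffAux.cnt
    rw [split, Set.ncard_union_eq ?_ ?_ ?_]
    · rw [Set.disjoint_left]
      rintro p ⟨⟨h1, _⟩, _⟩ ⟨h2, _⟩
      rw [I0] at h2
      have := h2.2
      omega
    · exact fin.subset (by rw [split]; exact Set.subset_union_left)
    · exact fin.subset (by rw [split]; exact Set.subset_union_right)
  rw [AffAux.alen_eq hr hpa, AffAux.alen_eq hr hw0a, tot]
  congr 1
  -- the weight
  let g : ℤ × ℤ → (ℤ × ℤ) × ℤ × ℤ :=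
    fun p => ((βl (dplus p.1), βm p.1), (βl (dplus p.2), βm p.2))
  let P : (ℤ × ℤ) × ℤ × ℤ → Prop :=
    fun q => 1 ≤ q.1.1 ∧ q.1.1 ≤ (n : ℤ) ∧ q.2.1 ≤ q.1.1 ∧ q.1.2 < q.2.2
  have e1 : {p | p ∈ T ∧ 1 ≤ dplus p.1 ∧ dplus p.1 ≤ (r:ℤ)} = {p | P (g p)} := by
    ext p
    have := hl.rng (dplus p.1)
    simp only [T, P, g, Set.mem_ofPred_eq]
    tauto
  have hfin : {p | P (g p)}.Finite := by
    rw [← e1]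
    obtain ⟨C, hC⟩ := AffAux.aff_bdd hr hpa
    apply Set.Finite.subset
      ((Set.finite_Icc (1 - C) (r + C)).prod (Set.finite_Icc (1 - C) (r + C + 2 * C)))
    rintro ⟨a, b⟩ ⟨h0, h3, h4⟩
    have h5 : (a, b) ∈ AffAux.InvS dplus := by rw [I1]; exact Or.inl h0
    obtain ⟨h1, h2⟩ := h5
    have ha := abs_le.1 (hC a)
    have hb := abs_le.1 (hC b)
    simp only [Set.mem_prod, Set.mem_Icc] at *
    refine ⟨⟨?_, ?_⟩, ?_, ?_⟩ <;> linarith [ha.1, ha.2, hb.1, hb.2]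
  rw [AffAux.cnt_eq hr hT (fun p => dplus p.1) (fun p k => by simp [AffAux.aff_shift hpa]), e1,
    AffAux.ncard_fiber g P hfin]
  unfold dWt
  apply finsum_congr
  intro q
  apply finsum_congr
  intro _
  rw [AffAux.JMat_eq hr hl hm d u v hu hv, AffAux.JMat_eq hr hl hm d u v hu hv, ← hw,
    ← Set.ncard_prod]
  congr 1
  ext ⟨a, b⟩
  obtain ⟨⟨i, j⟩, k, l⟩ := q
  simp [g]
end
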